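/- Suppose char(k) = 0 and let Δ be a homology (d−1)-sphere over k having the weak Lefschetz property. If h_{r−1}(Δ) = h_r(Δ) for some r ≤ d/2, then Δ(r−1) is a homology d-ball over k whose boundary complex equals Δ. -/

import Mathlib

open Finset

variable {V : Type*} [DecidableEq V] [Fintype V]

/-- A (possibly empty) simplicial complex on the vertex set `V`,
given as its set of faces: a collection of finite subsets of `V`
closed under taking subsets. -/
def IsComplex (Δ : Set (Finset V)) : Prop :=
  ∀ F ∈ Δ, ∀ G ⊆ F, G ∈ Δ

/-- `skc Δ i` is the complex `Δ(i) = {F ⊆ V : skelᵢ(2^F) ⊆ Δ}`: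
all subsets `F` of `V` all of whose subsets of cardinality at most `i+1`
are faces of `Δ`. -/
def skc (Δ : Set (Finset V)) (i : ℕ) : Set (Finset V) :=
  {F | ∀ G ⊆ F, G.card ≤ i + 1 → G ∈ Δ}

/-- The `k`-skeleton of a complex: faces of cardinality at most `k+1`. -/
def skel (Δ : Set (Finset V)) (k : ℕ) : Set (Finset V) :=
  {F ∈ Δ | F.card ≤ k + 1}

/-- A missing face of `Δ`: a non-face all of whose proper subsets are faces. -/
def IsMissingFace (Δ : Set (Finset V)) (F : Finset V) : Prop :=
  F ∉ Δ ∧ ∀ G ⊂ F, G ∈ Δ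

/-- The link of a face. -/
def link (Δ : Set (Finset V)) (F : Finset V) : Set (Finset V) :=
  {G | Disjoint F G ∧ F ∪ G ∈ Δ}

/-- `numFacesCard Δ j` is `f_{j-1}(Δ)`, the number of faces of `Δ` of
cardinality `j`. -/
noncomputable def numFacesCard (Δ : Set (Finset V)) (j : ℕ) : ℕ :=
  {F : Finset V | F ∈ Δ ∧ F.card = j}.ncard

/-- The `h`-numbers of a `(d-1)`-dimensional complex:
`h_i = ∑_{j=0}^{i} (-1)^{i-j} C(d-j, i-j) f_{j-1}`. -/
noncomputable def hVec (Δ : Set (Finset V)) (d i : ℕ) : ℤ :=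
  ∑ j ∈ Finset.range (i + 1),
    (-1 : ℤ) ^ (i - j) * ((d - j).choose (i - j)) * (numFacesCard Δ j)

/- ### Reduced simplicial homology over a field -/

section Homology

variable (𝕜 : Type*) [Field 𝕜] [LinearOrder V]

/-- Simplicial chains supported on a given set of finite subsets of `V`. -/
def chainsOn (A : Set (Finset V)) : Submodule 𝕜 (Finset V → 𝕜) where
  carrier := {f | ∀ G, f G ≠ 0 → G ∈ A}
  zero_mem' := by intro G hG; simp at hG
  add_mem' := by
    intro f g hf hg G hG
    by_cases h : f G = 0
    · exact hg G (by simpa [h] using hG)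
    · exact hf G h
  smul_mem' := by
    intro c f hf G hG
    exact hf G (by intro h; simp [h] at hG)

/-- The boundary operator of the (augmented) simplicial chain complex on the
full simplex on `V`: `∂(e_F) = ∑_{v ∈ F} (-1)^{pos of v in F} e_{F \ v}`,
written in the dual form `(∂ f) G = ∑_{v ∉ G} (-1)^{#{u ∈ G : u < v}} f (G ∪ {v})`.
The augmentation is included (singletons map onto the empty-set generator),
so the homology computed below is reduced homology. -/
noncomputable def bdryMap : (Finset V → 𝕜) →ₗ[𝕜] (Finset V → 𝕜) where
  toFun f := fun G => ∑ v ∈ Gᶜ,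
    ((-1 : 𝕜) ^ ((G.filter (fun u => u < v)).card)) * f (insert v G)
  map_add' f g := by
    funext G
    simp [mul_add, Finset.sum_add_distrib]
  map_smul' c f := by
    funext G
    simp [Finset.mul_sum]
    congr 1; funext v; ring

/-- Reduced cycles of `Δ` in cardinality `c` (i.e. dimension `c-1`). -/
noncomputable def redCycles (Δ : Set (Finset V)) (c : ℕ) :
    Submodule 𝕜 (Finset V → 𝕜) :=
  (chainsOn 𝕜 {F | F ∈ Δ ∧ F.card = c}) ⊓ LinearMap.ker (bdryMap 𝕜)

/-- Reduced boundaries of `Δ` in cardinality `c`. -/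
noncomputable def redBdries (Δ : Set (Finset V)) (c : ℕ) :
    Submodule 𝕜 (Finset V → 𝕜) :=
  Submodule.map (bdryMap 𝕜) (chainsOn 𝕜 {F | F ∈ Δ ∧ F.card = c + 1})

/-- `redH 𝕜 Δ c` is the reduced simplicial homology `H̃_{c-1}(Δ; 𝕜)`
(indexed by the cardinality `c` of faces rather than the dimension `c-1`). -/
noncomputable def redH (Δ : Set (Finset V)) (c : ℕ) : Type _ :=
  ↥(redCycles 𝕜 Δ c) ⧸
    Submodule.comap (redCycles 𝕜 Δ c).subtype (redBdries 𝕜 Δ c)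

noncomputable instance (Δ : Set (Finset V)) (c : ℕ) :
    AddCommGroup (redH 𝕜 Δ c) := by
  unfold redH; infer_instance

noncomputable instance (Δ : Set (Finset V)) (c : ℕ) :
    Module 𝕜 (redH 𝕜 Δ c) := by
  unfold redH; infer_instance

/-- `Δ` is a homology `n`-sphere over `𝕜`: it is an `n`-dimensional complex
such that for every face `F` (including `∅`) the reduced homology of the
link of `F` is that of a sphere of dimension `n - #F`, i.e.
`H̃_{c-1}(lk F) = 𝕜` if `c = n + 1 - #F` and `0` otherwise. -/
def IsHomologySphere (Δ : Set (Finset V)) (n : ℕ) : Prop :=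
  IsComplex Δ ∧ (∀ F ∈ Δ, F.card ≤ n + 1) ∧ (∃ F ∈ Δ, F.card = n + 1) ∧
  ∀ F ∈ Δ, ∀ c : ℕ,
    Module.finrank 𝕜 (redH 𝕜 (link Δ F) c) =
      if c + F.card = n + 1 then 1 else 0

/-- The boundary faces of a `d`-dimensional homology ball:
those faces `F` whose link has vanishing top reduced homology. -/
def bdryFaces (Δ : Set (Finset V)) (d : ℕ) : Set (Finset V) :=
  {F | F ∈ Δ ∧
    Module.finrank 𝕜 (redH 𝕜 (link Δ F) (d + 1 - F.card)) = 0}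

/-- `Δ` is a homology `d`-ball over `𝕜`: a `d`-dimensional complex all of
whose links have reduced homology vanishing except possibly in the top
dimension `d - #F`, where it is `𝕜` or `0`, and whose boundary complex is
a homology `(d-1)`-sphere. -/
def IsHomologyBall (Δ : Set (Finset V)) (d : ℕ) : Prop :=
  IsComplex Δ ∧ (∀ F ∈ Δ, F.card ≤ d + 1) ∧ (∃ F ∈ Δ, F.card = d + 1) ∧
  (∀ F ∈ Δ, ∀ c : ℕ,
    (c + F.card = d + 1 → Module.finrank 𝕜 (redH 𝕜 (link Δ F) c) ≤ 1) ∧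
    (c + F.card ≠ d + 1 → Module.finrank 𝕜 (redH 𝕜 (link Δ F) c) = 0)) ∧
  IsHomologySphere 𝕜 (bdryFaces 𝕜 Δ d) (d - 1)

/-- A homology `d`-ball is `(r-1)`-stacked if it has no interior faces of
dimension at most `d - r`, i.e. every interior face has cardinality at
least `d - r + 2`. -/
def IsStackedBall (Δ : Set (Finset V)) (d r : ℕ) : Prop :=
  IsHomologyBall 𝕜 Δ d ∧
  ∀ F ∈ Δ, F ∉ bdryFaces 𝕜 Δ d → d - r + 2 ≤ F.card

end Homology

/- ### Graded commutative algebra over polynomial rings, following the paper's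
definitions of l.s.o.p., Krull dimension, regular sequences, Cohen–Macaulayness,
the weak Lefschetz property, Hilbert series and `h`-vectors. -/

section Ring

variable (𝕜 : Type*) [Field 𝕜] {σ : Type*} [Fintype σ] [DecidableEq σ]

open MvPolynomial

/-- The Stanley–Reisner ideal `I_Δ` of a complex `Δ` on the vertex set `σ`:
the ideal generated by the squarefree monomials `x_F` for non-faces `F`. -/
noncomputable def SRideal (Δ : Set (Finset σ)) : Ideal (MvPolynomial σ 𝕜) :=
  Ideal.span {m | ∃ F : Finset σ, F ∉ Δ ∧ m = ∏ v ∈ F, MvPolynomial.X v}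

/-- `idealLE I m` is `I_{≤ m}`, the ideal generated by the elements of `I`
of degree at most `m`. -/
noncomputable def idealLE (I : Ideal (MvPolynomial σ 𝕜)) (m : ℕ) :
    Ideal (MvPolynomial σ 𝕜) :=
  Ideal.span {f | f ∈ I ∧ f.totalDegree ≤ m}

/-- The degree-`i` graded piece of `S/I`: the image of the space of
homogeneous polynomials of degree `i` in the quotient. -/
noncomputable def quotPiece (I : Ideal (MvPolynomial σ 𝕜)) (i : ℕ) :
    Submodule 𝕜 ((MvPolynomial σ 𝕜) ⧸ I) :=
  Submodule.map (Ideal.Quotient.mkₐ 𝕜 I).toLinearMap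
    (MvPolynomial.homogeneousSubmodule σ 𝕜 i)

/-- The Hilbert function of `S/I`. -/
noncomputable def hilb (I : Ideal (MvPolynomial σ 𝕜)) (i : ℕ) : ℕ :=
  Module.finrank 𝕜 (quotPiece 𝕜 I i)

/-- `θ` is a linear system of parameters for `S/I`: a sequence of linear
forms such that `S/(I + (θ))` is a finite dimensional `𝕜`-vector space. -/
def IsLsop (I : Ideal (MvPolynomial σ 𝕜)) {m : ℕ}
    (θ : Fin m → MvPolynomial σ 𝕜) : Prop :=
  (∀ i, θ i ∈ MvPolynomial.homogeneousSubmodule σ 𝕜 1) ∧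
    FiniteDimensional 𝕜
      ((MvPolynomial σ 𝕜) ⧸ (I ⊔ Ideal.span (Set.range θ)))

/-- The Krull dimension of `S/I`, defined (as in the paper) as the minimal
length of a linear system of parameters. -/
noncomputable def ringDim (I : Ideal (MvPolynomial σ 𝕜)) : ℕ :=
  sInf {m | ∃ θ : Fin m → MvPolynomial σ 𝕜, IsLsop 𝕜 I θ}

/-- `θ` is a regular sequence on `S/I`: each `θ i` is a nonzerodivisor on
`S/(I + (θ_0, …, θ_{i-1}))`. -/
def IsRegSeq (I : Ideal (MvPolynomial σ 𝕜)) {m : ℕ}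
    (θ : Fin m → MvPolynomial σ 𝕜) : Prop :=
  ∀ i : Fin m, ∀ g : MvPolynomial σ 𝕜,
    θ i * g ∈ I ⊔ Ideal.span (θ '' {j | j < i}) →
      g ∈ I ⊔ Ideal.span (θ '' {j | j < i})

/-- `S/I` is Cohen–Macaulay of Krull dimension `d`: the dimension is `d`,
and every l.s.o.p. is a regular sequence. -/
def IsCMdim (I : Ideal (MvPolynomial σ 𝕜)) (d : ℕ) : Prop :=
  ringDim 𝕜 I = d ∧
  ∀ θ : Fin d → MvPolynomial σ 𝕜, IsLsop 𝕜 I θ → IsRegSeq 𝕜 I θ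

/-- An Artinian quotient `S/I` has the weak Lefschetz property: there is a
linear form `w` such that multiplication `×w : (S/I)_m → (S/I)_{m+1}` is
injective or surjective for every `m`. -/
def HasWLP0 (I : Ideal (MvPolynomial σ 𝕜)) : Prop :=
  ∃ w : MvPolynomial σ 𝕜, w ∈ MvPolynomial.homogeneousSubmodule σ 𝕜 1 ∧
    ∀ m : ℕ,
      (∀ f ∈ quotPiece 𝕜 I m, Ideal.Quotient.mk I w * f = 0 → f = 0) ∨
      (∀ g ∈ quotPiece 𝕜 I (m+1), ∃ f ∈ quotPiece 𝕜 I m,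
        Ideal.Quotient.mk I w * f = g)

/-- `S/I` has the weak Lefschetz property (in dimension `d`): it is
Cohen–Macaulay of dimension `d` and there is an l.s.o.p. `Θ` such that
`S/(I + (Θ))` has the (Artinian) weak Lefschetz property. -/
def HasWLP (I : Ideal (MvPolynomial σ 𝕜)) (d : ℕ) : Prop :=
  IsCMdim 𝕜 I d ∧
  ∃ θ : Fin d → MvPolynomial σ 𝕜, IsLsop 𝕜 I θ ∧
    HasWLP0 𝕜 (I ⊔ Ideal.span (Set.range θ))

/-- `(h 0, h 1, …)` is the `h`-vector of `S/I` (where `d = dim S/I`), i.e.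
`H(S/I, t)·(1-t)^d = ∑ᵢ hᵢ tⁱ` as formal power series, expressed by
comparing coefficients. -/
def HasHVector (I : Ideal (MvPolynomial σ 𝕜)) (d : ℕ) (h : ℕ → ℤ) : Prop :=
  ∀ m : ℕ, h m = ∑ j ∈ Finset.range (d + 1),
    if j ≤ m then (-1 : ℤ) ^ j * (d.choose j) * (hilb 𝕜 I (m - j)) else 0

/-- `I` is a homogeneous ideal. -/
def IsHomogIdeal (I : Ideal (MvPolynomial σ 𝕜)) : Prop :=
  ∀ f ∈ I, ∀ i : ℕ, MvPolynomial.homogeneousComponent i f ∈ I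

end Ring

open Finset

set_option linter.unusedSectionVars false

section Kos
variable {𝕜 : Type*} [Field 𝕜] {U : Type*} [Fintype U] [LinearOrder U]
  {M : Type*} [AddCommGroup M] [Module 𝕜 M]

/-- The incidence sign of `v` with respect to `G`. -/
def sg (𝕜 : Type*) [Field 𝕜] {U : Type*} [LinearOrder U] (v : U) (G : Finset U) : 𝕜 :=
  (-1) ^ ((G.filter (fun u => u < v)).card)

lemma sg_mul_self (v : U) (G : Finset U) : sg 𝕜 v G * sg 𝕜 v G = 1 := by
  unfold sg; rw [← mul_pow]; simp

lemma sg_insert {u v : U} {G : Finset U} (hv : v ∉ G) :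
    sg 𝕜 u (insert v G) = (if v < u then -1 else 1) * sg 𝕜 u G := by
  unfold sg
  rw [Finset.filter_insert]
  split_ifs with h
  · rw [Finset.card_insert_of_notMem (by simp [hv]), pow_succ]; ring
  · simp

lemma sg_swap {u v : U} {G : Finset U} (huv : u ≠ v) (hu : u ∉ G) (hv : v ∉ G) :
    sg 𝕜 v G * sg 𝕜 u (insert v G) = -(sg 𝕜 u G * sg 𝕜 v (insert u G)) := by
  rw [sg_insert hu, sg_insert hv]
  rcases lt_or_gt_of_ne huv with h | h
  · simp [h, h.not_gt]; ring
  · simp [h, h.not_gt]; ring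

lemma sg_swap' {u v : U} {G : Finset U} (huv : u ≠ v) (hu : u ∉ G) (hv : v ∉ G) :
    sg 𝕜 v (insert u G) * sg 𝕜 u (insert v G) = -(sg 𝕜 u G * sg 𝕜 v G) := by
  rw [sg_insert hu, sg_insert hv]
  rcases lt_or_gt_of_ne huv with h | h
  · simp [h, h.not_gt]; ring
  · simp [h, h.not_gt]; ring

/-- Koszul type differential attached to operators `a`. -/
def kd (a : U → M →ₗ[𝕜] M) : (Finset U → M) →ₗ[𝕜] (Finset U → M) where
  toFun f := fun G => ∑ v ∈ Gᶜ, sg 𝕜 v G • a v (f (insert v G))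
  map_add' f g := by
    funext G
    simp [Finset.sum_add_distrib]
  map_smul' c f := by
    funext G
    simp only [Pi.smul_apply, map_smul, RingHom.id_apply, Finset.smul_sum]
    exact Finset.sum_congr rfl fun v _ => smul_comm _ _ _

/-- Wedge operator attached to operators `b`. -/
def kw (b : U → M →ₗ[𝕜] M) : (Finset U → M) →ₗ[𝕜] (Finset U → M) where
  toFun f := fun G => ∑ v ∈ G, sg 𝕜 v (G.erase v) • b v (f (G.erase v))
  map_add' f g := by
    funext G
    simp [Finset.sum_add_distrib]
  map_smul' c f := by
    funext G
    simp only [Pi.smul_apply, map_smul, RingHom.id_apply, Finset.smul_sum]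
    exact Finset.sum_congr rfl fun v _ => smul_comm _ _ _

lemma kd_apply (a : U → M →ₗ[𝕜] M) (f : Finset U → M) (G : Finset U) :
    kd a f G = ∑ v ∈ Gᶜ, sg 𝕜 v G • a v (f (insert v G)) := rfl

lemma kw_apply (a : U → M →ₗ[𝕜] M) (f : Finset U → M) (G : Finset U) :
    kw a f G = ∑ v ∈ G, sg 𝕜 v (G.erase v) • a v (f (G.erase v)) := rfl

lemma kd_kd (a b : U → M →ₗ[𝕜] M) (hab : ∀ u v x, a u (b v x) = b v (a u x))
    (f : Finset U → M) : kd a (kd b f) + kd b (kd a f) = 0 := by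
  funext G
  simp only [Pi.add_apply, kd_apply, map_sum, map_smul, Finset.smul_sum, smul_smul, Pi.zero_apply]
  rw [Finset.sum_comm' (s := Gᶜ) (t := fun v => (insert v G)ᶜ) (t' := Gᶜ)
    (s' := fun u => (insert u G)ᶜ) (by intro x y; simp; tauto), ← Finset.sum_add_distrib]
  refine Finset.sum_eq_zero fun u hu => ?_
  rw [← Finset.sum_add_distrib]
  refine Finset.sum_eq_zero fun v hv => ?_
  simp only [Finset.mem_compl, Finset.mem_insert, not_or] at hu hv
  rw [sg_swap (Ne.symm hv.1) hu hv.2, Finset.insert_comm u v, hab, ← add_smul]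
  simp

lemma kd_kd_self [CharZero 𝕜] (a : U → M →ₗ[𝕜] M) (haa : ∀ u v x, a u (a v x) = a v (a u x))
    (f : Finset U → M) : kd a (kd a f) = 0 := by
  have h := kd_kd a a haa f
  have h2 : (2 : 𝕜) • kd a (kd a f) = 0 := by rw [two_smul]; exact h
  exact (smul_eq_zero.mp h2).resolve_left two_ne_zero

lemma kd_kw (a b : U → M →ₗ[𝕜] M) (hab : ∀ u v x, u ≠ v → a u (b v x) = b v (a u x))
    (f : Finset U → M) (G : Finset U) : kd a (kw b f) G + kw b (kd a f) G =
      ∑ v ∈ Gᶜ, a v (b v (f G)) + ∑ v ∈ G, b v (a v (f G)) := by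
  have h1 : kd a (kw b f) G = ∑ v ∈ Gᶜ, a v (b v (f G)) +
      ∑ v ∈ Gᶜ, ∑ u ∈ G, (sg 𝕜 v G * sg 𝕜 u (insert v (G.erase u))) •
        a v (b u (f (insert v (G.erase u)))) := by
    rw [← Finset.sum_add_distrib, kd_apply]
    refine Finset.sum_congr rfl fun v hv => ?_
    have hv' : v ∉ G := by simpa using hv
    rw [kw_apply, Finset.sum_insert hv', Finset.erase_insert hv', map_add, map_smul, smul_add,
      smul_smul, sg_mul_self, one_smul, map_sum, Finset.smul_sum]
    congr 1
    refine Finset.sum_congr rfl fun u hu => ?_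
    have : u ≠ v := fun h => hv' (h ▸ hu)
    rw [map_smul, smul_smul, Finset.erase_insert_of_ne this.symm]
  have h2 : kw b (kd a f) G = ∑ v ∈ G, b v (a v (f G)) +
      ∑ v ∈ Gᶜ, ∑ u ∈ G, (sg 𝕜 u (G.erase u) * sg 𝕜 v (G.erase u)) •
        b u (a v (f (insert v (G.erase u)))) := by
    rw [Finset.sum_comm, ← Finset.sum_add_distrib, kw_apply]
    refine Finset.sum_congr rfl fun u hu => ?_
    have : (G.erase u)ᶜ = insert u Gᶜ := by
      ext x; by_cases hx : x = u <;> simp [hx]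
    rw [kd_apply, this, Finset.sum_insert (by simpa using hu), Finset.insert_erase hu, map_add,
      map_smul, smul_add, smul_smul, sg_mul_self, one_smul, map_sum, Finset.smul_sum]
    congr 1
    refine Finset.sum_congr rfl fun v hv => ?_
    rw [map_smul, smul_smul]
  rw [h1, h2]
  have h3 : ∑ v ∈ Gᶜ, ∑ u ∈ G, (sg 𝕜 v G * sg 𝕜 u (insert v (G.erase u))) •
        a v (b u (f (insert v (G.erase u)))) + ∑ v ∈ Gᶜ, ∑ u ∈ G, (sg 𝕜 u (G.erase u) * sg 𝕜 v (G.erase u)) •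
        b u (a v (f (insert v (G.erase u)))) = 0 := by
    rw [← Finset.sum_add_distrib]
    refine Finset.sum_eq_zero fun v hv => ?_
    rw [← Finset.sum_add_distrib]
    refine Finset.sum_eq_zero fun u hu => ?_
    have hv' : v ∉ G := by simpa using hv
    have huv : u ≠ v := fun h => hv' (h ▸ hu)
    rw [hab v u _ huv.symm, ← add_smul]
    have := sg_swap' (𝕜 := 𝕜) (G := G.erase u) huv (by simp) (by simp [hv'])
    rw [Finset.insert_erase hu] at this
    rw [this]; simp
  calc _ = ∑ v ∈ Gᶜ, a v (b v (f G)) + ∑ v ∈ G, b v (a v (f G)) + (∑ v ∈ Gᶜ, ∑ u ∈ G, (sg 𝕜 v G * sg 𝕜 u (insert v (G.erase u))) •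
        a v (b u (f (insert v (G.erase u)))) + ∑ v ∈ Gᶜ, ∑ u ∈ G, (sg 𝕜 u (G.erase u) * sg 𝕜 v (G.erase u)) •
        b u (a v (f (insert v (G.erase u))))) := by abel
    _ = _ := by rw [h3, add_zero]

end Kos

open Finset
set_option linter.unusedSectionVars false

section Top
variable {𝕜 : Type*} [Field 𝕜] [CharZero 𝕜] {U : Type*} [Fintype U] [LinearOrder U]

/-- the operators selecting the vertex `v` -/
def selOp (𝕜 : Type*) [Field 𝕜] {U : Type*} [LinearOrder U] (v : U) : U → 𝕜 →ₗ[𝕜] 𝕜 :=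
  fun u => if u = v then LinearMap.id else 0

/-- the part of a chain containing `v` -/
def iv (𝕜 : Type*) [Field 𝕜] {U : Type*} [Fintype U] [LinearOrder U] (v : U) :
    (Finset U → 𝕜) →ₗ[𝕜] (Finset U → 𝕜) := kd (selOp 𝕜 v)

/-- the cone operator -/
def cv (𝕜 : Type*) [Field 𝕜] {U : Type*} [Fintype U] [LinearOrder U] (v : U) :
    (Finset U → 𝕜) →ₗ[𝕜] (Finset U → 𝕜) := kw (selOp 𝕜 v)

lemma bdry_eq (f : Finset U → 𝕜) :
    bdryMap 𝕜 f = kd (fun _ => (LinearMap.id : 𝕜 →ₗ[𝕜] 𝕜)) f := by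
  funext G
  simp only [bdryMap, kd, LinearMap.coe_mk, AddHom.coe_mk, sg, LinearMap.id_apply, smul_eq_mul]

lemma selOp_apply (v u : U) (x : 𝕜) : selOp 𝕜 v u x = if u = v then x else 0 := by
  unfold selOp; split_ifs <;> simp

lemma iv_apply (v : U) (f : Finset U → 𝕜) (G : Finset U) :
    iv 𝕜 v f G = if v ∈ G then 0 else sg 𝕜 v G * f (insert v G) := by
  simp only [iv, kd_apply, selOp_apply, smul_eq_mul, mul_ite, mul_zero]
  rw [Finset.sum_ite_eq']
  simp only [Finset.mem_compl]
  split_ifs <;> simp_all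

lemma cv_apply (v : U) (f : Finset U → 𝕜) (G : Finset U) :
    cv 𝕜 v f G = if v ∈ G then sg 𝕜 v (G.erase v) * f (G.erase v) else 0 := by
  simp only [cv, kw_apply, selOp_apply, smul_eq_mul, mul_ite, mul_zero]
  rw [Finset.sum_ite_eq']

lemma bdry_bdry (f : Finset U → 𝕜) : bdryMap 𝕜 (bdryMap 𝕜 f) = 0 := by
  rw [bdry_eq, bdry_eq]
  exact kd_kd_self _ (fun _ _ _ => rfl) f

lemma bdry_iv (v : U) (f : Finset U → 𝕜) : bdryMap 𝕜 (iv 𝕜 v f) = - iv 𝕜 v (bdryMap 𝕜 f) := by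
  rw [bdry_eq, bdry_eq, eq_neg_iff_add_eq_zero]
  exact kd_kd (fun _ => (LinearMap.id : 𝕜 →ₗ[𝕜] 𝕜)) (selOp 𝕜 v) (fun _ _ _ => rfl) f

lemma bdry_cv (v : U) (f : Finset U → 𝕜) :
    bdryMap 𝕜 (cv 𝕜 v f) + cv 𝕜 v (bdryMap 𝕜 f) = f := by
  rw [bdry_eq, bdry_eq]
  funext G
  rw [Pi.add_apply, cv, kd_kw (fun _ => (LinearMap.id : 𝕜 →ₗ[𝕜] 𝕜)) (selOp 𝕜 v)
    (fun _ _ _ _ => rfl)]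
  simp only [LinearMap.id_apply, selOp_apply, Finset.sum_ite_eq', Finset.mem_compl]
  split_ifs <;> simp_all

lemma iv_cv (v : U) (f : Finset U → 𝕜) :
    iv 𝕜 v (cv 𝕜 v f) + cv 𝕜 v (iv 𝕜 v f) = f := by
  funext G
  rw [Pi.add_apply, cv, iv, kd_kw _ _ (fun x y z h => by
    simp only [selOp_apply]; split_ifs <;> simp_all)]
  simp only [selOp_apply]
  by_cases h : v ∈ G <;> simp [h, Finset.sum_ite_eq']

/-- chains on `A` in cardinality `c`. -/
abbrev Ch (𝕜 : Type*) [Field 𝕜] {U : Type*} [Fintype U] [LinearOrder U]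
    (A : Set (Finset U)) (c : ℕ) : Submodule 𝕜 (Finset U → 𝕜) :=
  chainsOn 𝕜 {F | F ∈ A ∧ F.card = c}

lemma mem_Ch {A : Set (Finset U)} {c : ℕ} {f : Finset U → 𝕜} :
    f ∈ Ch 𝕜 A c ↔ ∀ G, f G ≠ 0 → G ∈ A ∧ G.card = c := Iff.rfl

/-- exactness at cardinality `c`. -/
def Ex (𝕜 : Type*) [Field 𝕜] {U : Type*} [Fintype U] [LinearOrder U]
    (A : Set (Finset U)) (c : ℕ) : Prop :=
  ∀ z ∈ Ch 𝕜 A c, bdryMap 𝕜 z = 0 → ∃ y ∈ Ch 𝕜 A (c + 1), bdryMap 𝕜 y = z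

/-- deletion of the vertices in `T`. -/
def del {U : Type*} (A : Set (Finset U)) (T : Finset U) : Set (Finset U) :=
  {F | F ∈ A ∧ Disjoint T F}

lemma bdry_apply (f : Finset U → 𝕜) (G : Finset U) :
    bdryMap 𝕜 f G = ∑ v ∈ Gᶜ, sg 𝕜 v G * f (insert v G) := rfl

lemma Ch_bdry {A : Set (Finset U)} (hA : IsComplex A) {c : ℕ} {f : Finset U → 𝕜}
    (hf : f ∈ Ch 𝕜 A (c + 1)) : bdryMap 𝕜 f ∈ Ch 𝕜 A c := by
  intro G hG
  rw [bdry_apply] at hG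
  obtain ⟨v, hv, h⟩ := Finset.exists_ne_zero_of_sum_ne_zero hG
  have h2 := hf _ (right_ne_zero_of_mul h)
  have hv' : v ∉ G := by simpa using hv
  refine ⟨hA _ h2.1 _ (Finset.subset_insert _ _), ?_⟩
  have := h2.2
  rw [Finset.card_insert_of_notMem hv'] at this
  omega

lemma Ch_bdry_zero {A : Set (Finset U)} {f : Finset U → 𝕜}
    (hf : f ∈ Ch 𝕜 A 0) : bdryMap 𝕜 f = 0 := by
  funext G
  rw [bdry_apply]
  refine Finset.sum_eq_zero fun v _ => ?_
  have : f (insert v G) = 0 := by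
    by_contra h
    have := (hf _ h).2
    simp at this
  simp [this]

lemma Ch_mono {A B : Set (Finset U)} (h : A ⊆ B) {c : ℕ} {f : Finset U → 𝕜}
    (hf : f ∈ Ch 𝕜 A c) : f ∈ Ch 𝕜 B c := fun G hG => ⟨h (hf G hG).1, (hf G hG).2⟩

lemma Ch_iv {A : Set (Finset U)} {c : ℕ} {f : Finset U → 𝕜} (v : U)
    (hf : f ∈ Ch 𝕜 A (c + 1)) : iv 𝕜 v f ∈ Ch 𝕜 (link A {v}) c := by
  intro G hG
  rw [iv_apply] at hG
  split_ifs at hG with h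
  · exact absurd rfl hG
  have h2 := hf _ (right_ne_zero_of_mul hG)
  refine ⟨⟨by simpa using h, by simpa [← Finset.insert_eq] using h2.1⟩, ?_⟩
  have := h2.2
  rw [Finset.card_insert_of_notMem h] at this
  omega

lemma iv_Ch_zero {A : Set (Finset U)} {f : Finset U → 𝕜} (v : U)
    (hf : f ∈ Ch 𝕜 A 0) : iv 𝕜 v f = 0 := by
  funext G
  rw [iv_apply]
  have : f (insert v G) = 0 := by
    by_contra h
    have := (hf _ h).2
    simp at this
  simp [this]

lemma Ch_cv {A : Set (Finset U)} {c : ℕ} {f : Finset U → 𝕜} (v : U)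
    (hf : f ∈ Ch 𝕜 (link A {v}) c) : cv 𝕜 v f ∈ Ch 𝕜 A (c + 1) := by
  intro G hG
  rw [cv_apply] at hG
  split_ifs at hG with h
  · have h2 := hf _ (right_ne_zero_of_mul hG)
    have h3 := h2.1.2
    rw [← Finset.insert_eq, Finset.insert_erase h] at h3
    refine ⟨h3, ?_⟩
    have := h2.2
    rw [Finset.card_erase_of_mem h] at this
    have : 0 < G.card := Finset.card_pos.mpr ⟨v, h⟩
    omega
  · exact absurd rfl hG

lemma iv_of_link {A : Set (Finset U)} {c : ℕ} {f : Finset U → 𝕜} {v : U}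
    (hf : f ∈ Ch 𝕜 (del A {v}) c) : iv 𝕜 v f = 0 := by
  funext G
  rw [iv_apply]
  have : f (insert v G) = 0 := by
    by_contra h
    have := (hf _ h).1.2
    simp at this
  simp [this]

lemma Ch_del {A : Set (Finset U)} {c : ℕ} {f : Finset U → 𝕜} {v : U}
    (hf : f ∈ Ch 𝕜 A c) (h0 : iv 𝕜 v f = 0) : f ∈ Ch 𝕜 (del A {v}) c := by
  intro G hG
  refine ⟨⟨(hf G hG).1, ?_⟩, (hf G hG).2⟩
  rw [Finset.disjoint_singleton_left]
  intro hv
  have := congrFun h0 (G.erase v)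
  rw [iv_apply] at this
  simp only [Finset.notMem_erase, if_false, Finset.insert_erase hv, Pi.zero_apply] at this
  rcases mul_eq_zero.mp this with h | h
  · have := sg_mul_self (𝕜 := 𝕜) v (G.erase v)
    simp [h] at this
  · exact hG h

lemma link_sub_del {A : Set (Finset U)} (hA : IsComplex A) (v : U) : link A {v} ⊆ del A {v} :=
  fun _ hF => ⟨hA _ hF.2 _ Finset.subset_union_right, hF.1⟩

lemma del_sub {A : Set (Finset U)} (T : Finset U) : del A T ⊆ A := fun _ hF => hF.1

lemma IsComplex.del {A : Set (Finset U)} (hA : IsComplex A) (T : Finset U) :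
    IsComplex (del A T) :=
  fun F hF G hG => ⟨hA F hF.1 G hG, hF.2.mono_right hG⟩

lemma IsComplex.link {A : Set (Finset U)} (hA : IsComplex A) (T : Finset U) :
    IsComplex (link A T) :=
  fun _ hF _ hG => ⟨hF.1.mono_right hG, hA _ hF.2 _ (Finset.union_subset_union_right hG)⟩

lemma iv_cv_of_del {A : Set (Finset U)} {c : ℕ} {f : Finset U → 𝕜} {v : U}
    (hf : f ∈ Ch 𝕜 (del A {v}) c) : iv 𝕜 v (cv 𝕜 v f) = f := by
  have := iv_cv v f
  rwa [iv_of_link hf, map_zero, add_zero] at this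

lemma iv_iv (v : U) (f : Finset U → 𝕜) : iv 𝕜 v (iv 𝕜 v f) = 0 := by
  funext G
  simp only [iv_apply]
  simp

lemma del_del (A : Set (Finset U)) (T : Finset U) (v : U) :
    del (del A T) {v} = del A (insert v T) := by
  ext F
  simp only [del, Set.mem_ofPred_eq, Finset.disjoint_singleton_left, Finset.disjoint_insert_left]
  tauto

lemma del_empty (A : Set (Finset U)) : del A ∅ = A := by
  ext F; simp [del]

lemma link_empty (A : Set (Finset U)) : link A ∅ = A := by
  ext F; simp [link]

lemma link_del (A : Set (Finset U)) (T : Finset U) {v : U} (hv : v ∉ T) :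
    link (del A T) {v} = del (link A {v}) T := by
  ext F
  simp only [del, link, Set.mem_ofPred_eq, Finset.disjoint_singleton_left,
    Finset.disjoint_union_right, Finset.disjoint_singleton_right]
  tauto

lemma link_link (A : Set (Finset U)) (F : Finset U) {v : U} (hv : v ∉ F) :
    link (link A F) {v} = link A (insert v F) := by
  ext G
  simp only [link, Set.mem_ofPred_eq, Finset.disjoint_singleton_left, Finset.disjoint_insert_left,
    Finset.disjoint_union_right, Finset.disjoint_singleton_right]
  have : F ∪ ({v} ∪ G) = insert v F ∪ G := by
    ext x; simp
  rw [this]; tauto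

lemma link_link' (A : Set (Finset U)) (F : Finset U) {v : U} (hv : v ∉ F) :
    link (link A {v}) F = link A (insert v F) := by
  ext G
  simp only [link, Set.mem_ofPred_eq, Finset.disjoint_singleton_left, Finset.disjoint_insert_left,
    Finset.mem_union]
  have : {v} ∪ (F ∪ G) = insert v F ∪ G := by
    ext x; simp
  rw [this]; tauto

/-- homology spheres, with chains; `e` is the cardinality of the facets. -/
def Sph (𝕜 : Type*) [Field 𝕜] {U : Type*} [Fintype U] [LinearOrder U]
    (A : Set (Finset U)) (e : ℕ) : Prop :=
  IsComplex A ∧ ∅ ∈ A ∧ (∀ F ∈ A, F.card ≤ e) ∧ ∀ F ∈ A,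
    (∀ c, c + F.card ≠ e → Ex 𝕜 (link A F) c) ∧
    ∃ g ∈ Ch 𝕜 (link A F) (e - F.card), bdryMap 𝕜 g = 0 ∧ g ≠ 0 ∧
      ∀ z ∈ Ch 𝕜 (link A F) (e - F.card), bdryMap 𝕜 z = 0 → ∃ t : 𝕜, z = t • g

lemma Sph.link {A : Set (Finset U)} {e : ℕ} (h : Sph 𝕜 A (e + 1)) {v : U} (hv : {v} ∈ A) :
    Sph 𝕜 (link A {v}) e := by
  obtain ⟨h1, h2, h3, h4⟩ := h
  refine ⟨h1.link _, by simpa [_root_.link] using hv, ?_, ?_⟩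
  · intro F hF
    have := h3 _ hF.2
    rw [Finset.card_union_of_disjoint hF.1] at this
    simp at this; omega
  · intro F hF
    have hvF : v ∉ F := by simpa using hF.1
    have := h4 _ hF.2
    rw [← Finset.insert_eq, Finset.card_insert_of_notMem hvF, Nat.add_sub_add_right] at this
    rw [link_link' _ _ hvF]
    exact ⟨fun c hc => this.1 c (by omega), this.2⟩

lemma Sph.ex {A : Set (Finset U)} {e : ℕ} (h : Sph 𝕜 A e) {c : ℕ} (hc : c ≠ e) : Ex 𝕜 A c := by
  have := (h.2.2.2 ∅ h.2.1).1 c (by simpa using hc)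
  rwa [link_empty] at this

lemma Sph.gen {A : Set (Finset U)} {e : ℕ} (h : Sph 𝕜 A e) :
    ∃ g ∈ Ch 𝕜 A e, bdryMap 𝕜 g = 0 ∧ g ≠ 0 ∧
      ∀ z ∈ Ch 𝕜 A e, bdryMap 𝕜 z = 0 → ∃ t : 𝕜, z = t • g := by
  have := (h.2.2.2 ∅ h.2.1).2
  simpa [link_empty] using this

lemma Sph.gen' {A : Set (Finset U)} {e : ℕ} (h : Sph 𝕜 A e) {g : Finset U → 𝕜}
    (hg : g ∈ Ch 𝕜 A e) (hg0 : bdryMap 𝕜 g = 0) (hgn : g ≠ 0) {z : Finset U → 𝕜}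
    (hz : z ∈ Ch 𝕜 A e) (hz0 : bdryMap 𝕜 z = 0) : ∃ t : 𝕜, z = t • g := by
  obtain ⟨g1, _, _, _, h4⟩ := h.gen
  obtain ⟨s, rfl⟩ := h4 g hg hg0
  obtain ⟨t, rfl⟩ := h4 z hz hz0
  have hs : s ≠ 0 := by rintro rfl; simp at hgn
  exact ⟨t / s, by rw [smul_smul, div_mul_cancel₀ _ hs]⟩

/-- singleton chain difference -/
lemma vertex_diff {A : Set (Finset U)} {u v : U} (hu : {u} ∈ A) (hv : {v} ∈ A) (huv : u ≠ v) :
    ∃ z ∈ Ch 𝕜 A 1, bdryMap 𝕜 z = 0 ∧ z {u} = 1 ∧ z {v} = -1 ∧ 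
      (∀ w, w ≠ u → w ≠ v → z {w} = 0) := by
  have hne : ({v} : Finset U) ≠ {u} := by simpa using huv.symm
  refine ⟨Pi.single {u} 1 - Pi.single {v} 1, ?_, ?_, ?_, ?_, ?_⟩
  · intro G hG
    by_cases h1 : G = {u}
    · subst h1; exact ⟨hu, by simp⟩
    by_cases h2 : G = {v}
    · subst h2; exact ⟨hv, by simp⟩
    simp [Pi.single_apply, h1, h2] at hG
  · funext G
    rw [bdry_apply]
    by_cases hG : G = ∅
    · subst hG
      simp [Pi.single_apply, sg]
    · refine Finset.sum_eq_zero fun w hw => ?_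
      have hw' : w ∉ G := by simpa using hw
      have : ∀ x : U, insert w G ≠ {x} := by
        intro x hx
        have := congrArg Finset.card hx
        rw [Finset.card_insert_of_notMem hw'] at this
        simp at this; exact hG this
      simp [Pi.single_apply, this]
  · simp [Pi.single_apply, hne.symm]
  · simp [Pi.single_apply, hne]
  · intro w h1 h2
    simp [Pi.single_apply, h1, h2]

lemma iv_ne_zero_iff {f : Finset U → 𝕜} {v : U} : iv 𝕜 v f ≠ 0 ↔ ∃ G, v ∈ G ∧ f G ≠ 0 := by
  constructor
  · intro h
    obtain ⟨G, hG⟩ := Function.ne_iff.mp h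
    rw [iv_apply] at hG
    split_ifs at hG with hv
    · exact absurd rfl hG
    · exact ⟨insert v G, by simp, right_ne_zero_of_mul hG⟩
  · rintro ⟨G, hv, hG⟩ h
    have := congrFun h (G.erase v)
    rw [iv_apply] at this
    simp only [Finset.notMem_erase, if_false, Finset.insert_erase hv, Pi.zero_apply] at this
    rcases mul_eq_zero.mp this with h | h
    · have := sg_mul_self (𝕜 := 𝕜) v (G.erase v)
      simp [h] at this
    · exact hG h

lemma full_support (e : ℕ) : ∀ (A : Set (Finset U)), Sph 𝕜 A e → ∀ g ∈ Ch 𝕜 A e,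
    bdryMap 𝕜 g = 0 → g ≠ 0 → ∀ v, {v} ∈ A → iv 𝕜 v g ≠ 0 := by
  induction e with
  | zero =>
    intro A hA g _ _ _ v hv
    have := hA.2.2.1 _ hv
    simp at this
  | succ e ih =>
    intro A hA g hg hg0 hgn v hv hcon
    -- some vertex in the support
    obtain ⟨G, hG⟩ := Function.ne_iff.mp hgn
    have hGc := hg G hG
    obtain ⟨u, huG⟩ : G.Nonempty := by
      rw [← Finset.card_pos, hGc.2]; omega
    have hu : iv 𝕜 u g ≠ 0 := iv_ne_zero_iff.mpr ⟨G, huG, hG⟩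
    have huA : {u} ∈ A := hA.1 _ hGc.1 _ (by simpa using huG)
    have huv : u ≠ v := by rintro rfl; exact hu hcon
    obtain ⟨z, hz, hz0, hzu, hzv, hzw⟩ := vertex_diff (𝕜 := 𝕜) huA hv huv
    by_cases he : e = 0
    · subst he
      obtain ⟨t, ht⟩ := hA.gen' hg hg0 hgn hz hz0
      have h1 : g {v} = 0 := by
        by_contra h
        exact (iv_ne_zero_iff.mpr ⟨{v}, by simp, h⟩) hcon
      have h2 := congrFun ht {v}
      rw [hzv, Pi.smul_apply, h1] at h2
      simp at h2
    · obtain ⟨y, hy, hyz⟩ := hA.ex (c := 1) (by omega) z hz hz0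
      classical
      -- the set of vertices in the support
      let C : Finset U := Finset.univ.filter fun w => iv 𝕜 w g ≠ 0
      have hadj : ∀ a b, a ≠ b → ({a, b} : Finset U) ∈ A → a ∈ C → b ∈ C := by
        intro a b hab hAab ha
        simp only [C, Finset.mem_filter, Finset.mem_univ, true_and] at ha ⊢
        have haA : {a} ∈ A := hA.1 _ hAab _ (by simp)
        have := ih (link A {a}) (hA.link haA) (iv 𝕜 a g) (Ch_iv a hg)
          (by rw [bdry_iv, hg0, map_zero, neg_zero]) ha b
          ⟨by simpa using hab, by simpa [← Finset.insert_eq] using hAab⟩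
        obtain ⟨G, hbG, hG⟩ := iv_ne_zero_iff.mp this
        rw [iv_apply] at hG
        split_ifs at hG with h
        · exact absurd rfl hG
        exact iv_ne_zero_iff.mpr ⟨insert a G, by simp [hbG], right_ne_zero_of_mul hG⟩
      have hsum : ∑ w ∈ C, z {w} = 1 := by
        rw [Finset.sum_eq_single u]
        · exact hzu
        · intro w hw hwu
          refine hzw w hwu ?_
          rintro rfl
          simp only [C, Finset.mem_filter, Finset.mem_univ, true_and] at hw
          exact hw hcon
        · intro h
          simp [C, hu] at h
      have hsum0 : ∑ w ∈ C, z {w} = 0 := by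
        rw [← hyz]
        simp only [bdry_apply]
        have : ∀ w ∈ C, ∑ x ∈ ({w} : Finset U)ᶜ, sg 𝕜 x {w} * y (insert x {w}) =
            ∑ x ∈ C, if x = w then 0 else sg 𝕜 x {w} * y (insert x {w}) := by
          intro w hw
          rw [← Finset.sum_filter_add_sum_filter_not ({w} : Finset U)ᶜ (fun x => x ∈ C)]
          rw [Finset.sum_eq_zero (s := ({w} : Finset U)ᶜ.filter (fun x => ¬ x ∈ C)), add_zero,
            ← Finset.sum_filter_add_sum_filter_not C (fun x => x = w),
            Finset.sum_eq_zero (s := C.filter (fun x => x = w)), zero_add]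
          · apply Finset.sum_congr_of_eq_on_inter
            · intro x h1 h2; exfalso; simp at h1 h2; tauto
            · intro x h1 h2; exfalso; simp at h1 h2; tauto
            · intro x h1 h2
              simp at h2
              simp [h2.2]
          · intro x hx
            simp at hx
            simp [hx.2]
          · intro x hx
            simp only [Finset.mem_filter, Finset.mem_compl, Finset.mem_singleton] at hx
            have : y (insert x {w}) = 0 := by
              by_contra h
              refine hx.2 (hadj w x (Ne.symm hx.1) ?_ hw)
              rw [Finset.pair_comm]
              exact (hy _ h).1
            rw [this, mul_zero]
        rw [Finset.sum_congr rfl this]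
        set s := ∑ x ∈ C, ∑ i ∈ C, (if i = x then 0 else sg 𝕜 i {x} * y (insert i {x})) with hs
        have hanti : s = -s := by
          conv_lhs => rw [hs, Finset.sum_comm]
          rw [hs, ← Finset.sum_neg_distrib]
          refine Finset.sum_congr rfl fun a _ => ?_
          rw [← Finset.sum_neg_distrib]
          refine Finset.sum_congr rfl fun b _ => ?_
          by_cases hab : a = b
          · simp [hab]
          · rw [if_neg hab, if_neg (Ne.symm hab)]
            have := sg_swap (𝕜 := 𝕜) (G := ∅) hab (by simp) (by simp)
            simp [sg] at this
            have e1 : sg 𝕜 a {b} = - sg 𝕜 b {a} := by simpa [sg] using this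
            rw [e1, Finset.pair_comm a b]; ring
        have : (2 : 𝕜) * s = 0 := by rw [two_mul]; nth_rewrite 2 [hanti]; ring
        exact (mul_eq_zero.mp this).resolve_left two_ne_zero
      rw [hsum] at hsum0
      exact one_ne_zero hsum0

end Top

open Finset
set_option linter.unusedSectionVars false

section Top2
variable {𝕜 : Type*} [Field 𝕜] [CharZero 𝕜] {U : Type*} [Fintype U] [LinearOrder U]

lemma split_off {A : Set (Finset U)} (hA : IsComplex A) {v : U} {c : ℕ}
    {η ξ : Finset U → 𝕜} (hη : η ∈ Ch 𝕜 A (c + 1)) (hξ : ξ ∈ Ch 𝕜 (link A {v}) (c + 1))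
    (h : bdryMap 𝕜 ξ = iv 𝕜 v η) :
    η + bdryMap 𝕜 (cv 𝕜 v ξ) ∈ Ch 𝕜 (del A {v}) (c + 1) ∧
      bdryMap 𝕜 (η + bdryMap 𝕜 (cv 𝕜 v ξ)) = bdryMap 𝕜 η := by
  refine ⟨Ch_del (add_mem hη (Ch_bdry hA (Ch_cv v hξ))) ?_, ?_⟩
  · have h1 := bdry_iv (𝕜 := 𝕜) v (cv 𝕜 v ξ)
    rw [iv_cv_of_del (Ch_mono (link_sub_del hA v) hξ), h] at h1
    rw [map_add, h1, neg_add_cancel]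
  · rw [map_add, bdry_bdry, add_zero]

lemma Sph.ex_del {A : Set (Finset U)} {e : ℕ} (h : Sph 𝕜 A e) {v : U} (hv : {v} ∈ A) (c : ℕ) :
    Ex 𝕜 (del A {v}) c := by
  intro z hz hz0
  have he : 1 ≤ e := by simpa using h.2.2.1 _ hv
  obtain ⟨e, rfl⟩ : ∃ e', e = e' + 1 := ⟨e - 1, by omega⟩
  obtain ⟨g, hg, hg0, hgn, hgen⟩ := h.gen
  have hfs := full_support _ A h g hg hg0 hgn v hv
  by_cases hc : c = e + 1
  · subst hc
    obtain ⟨t, rfl⟩ := hgen z (Ch_mono (del_sub _) hz) hz0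
    have := iv_of_link hz
    rw [map_smul] at this
    rcases smul_eq_zero.mp this with h | h
    · subst h; exact ⟨0, zero_mem _, by simp⟩
    · exact absurd h hfs
  · obtain ⟨η, hη, rfl⟩ := h.ex hc z (Ch_mono (del_sub _) hz) hz0
    have hcy : bdryMap 𝕜 (iv 𝕜 v η) = 0 := by
      rw [bdry_iv, iv_of_link hz, neg_zero]
    by_cases hc2 : c = e
    · subst hc2
      obtain ⟨t, ht⟩ := (h.link hv).gen' (Ch_iv v hg)
        (by rw [bdry_iv, hg0, map_zero, neg_zero]) hfs (Ch_iv v hη) hcy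
      refine ⟨η - t • g, Ch_del (sub_mem hη (Submodule.smul_mem _ _ hg)) ?_, ?_⟩
      · rw [map_sub, map_smul, ht, sub_self]
      · rw [map_sub, map_smul, hg0, smul_zero, sub_zero]
    · obtain ⟨ξ, hξ, hξ2⟩ := (h.link hv).ex hc2 _ (Ch_iv v hη) hcy
      have := split_off h.1 hη hξ hξ2
      exact ⟨_, this.1, this.2⟩

lemma AD (T : Finset U) : T.Nonempty → ∀ (A : Set (Finset U)) (e q c : ℕ), Sph 𝕜 A e →
    (∀ F ⊆ T, F.card ≤ q → F ∈ A) → e + 1 ≤ c + q → Ex 𝕜 (del A T) c := by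
  induction T using Finset.induction_on with
  | empty => simp
  | insert v T hvT ih =>
    intro _ A e q c hA hq hc
    rcases Nat.eq_zero_or_pos q with rfl | hq0
    · intro z hz _
      refine ⟨0, zero_mem _, ?_⟩
      rw [map_zero]
      symm
      funext G
      by_contra hG
      have h1 := (hz G hG).2
      have h2 := hA.2.2.1 _ (hz G hG).1.1
      omega
    have hv : {v} ∈ A := hq _ (by simp) (by rw [Finset.card_singleton]; omega)
    rcases T.eq_empty_or_nonempty with rfl | hT
    · simpa using hA.ex_del hv c
    intro z hz hz0
    rw [← del_del] at hz ⊢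
    have he : 1 ≤ e := by simpa using hA.2.2.1 _ hv
    obtain ⟨e, rfl⟩ : ∃ e', e = e' + 1 := ⟨e - 1, by omega⟩
    obtain ⟨η, hη, rfl⟩ := ih hT A _ q c hA (fun F hF => hq F (hF.trans (Finset.subset_insert _ _)))
      hc z (Ch_mono (del_sub _) hz) hz0
    have hcy : bdryMap 𝕜 (iv 𝕜 v η) = 0 := by
      rw [bdry_iv, iv_of_link hz, neg_zero]
    have hiv := Ch_iv v hη
    rw [link_del _ _ hvT] at hiv
    obtain ⟨ξ, hξ, hξ2⟩ := ih hT (link A {v}) e (q - 1) c (hA.link hv) (by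
      intro F hF hFc
      have hvF : v ∉ F := fun h => hvT (hF h)
      refine ⟨by simpa using hvF, ?_⟩
      rw [← Finset.insert_eq]
      refine hq _ (Finset.insert_subset_insert _ hF) ?_
      rw [Finset.card_insert_of_notMem hvF]; omega) (by omega) _ hiv hcy
    rw [← link_del _ _ hvT] at hξ
    have := split_off (hA.1.del T) hη hξ hξ2
    exact ⟨_, this.1, this.2⟩

end Top2

open Finset
set_option linter.unusedSectionVars false

section Top3
variable {𝕜 : Type*} [Field 𝕜] [CharZero 𝕜] {U : Type*} [Fintype U] [LinearOrder U]

/-- relative exactness -/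
def RV (𝕜 : Type*) [Field 𝕜] {U : Type*} [Fintype U] [LinearOrder U]
    (Γ Δ : Set (Finset U)) (c : ℕ) : Prop :=
  ∀ z ∈ Ch 𝕜 Γ c, bdryMap 𝕜 z ∈ chainsOn 𝕜 Δ →
    ∃ y ∈ Ch 𝕜 Γ (c + 1), z - bdryMap 𝕜 y ∈ chainsOn 𝕜 Δ

/-- pairs of complexes behaving like a homology ball of type `D` and its boundary -/
def PT (𝕜 : Type*) [Field 𝕜] {U : Type*} [Fintype U] [LinearOrder U]
    (Γ Δ : Set (Finset U)) (D : ℕ) : Prop :=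
  IsComplex Γ ∧ IsComplex Δ ∧ Δ ⊆ Γ ∧
  (∀ T ∈ Γ, T.Nonempty → ∀ c, RV 𝕜 (del Γ T) (del Δ T) c) ∧
  (∀ c, c ≠ D → RV 𝕜 Γ Δ c) ∧
  ∃ z ∈ Ch 𝕜 Γ D, bdryMap 𝕜 z ∈ chainsOn 𝕜 Δ ∧
    (∀ y ∈ Ch 𝕜 Γ (D + 1), z - bdryMap 𝕜 y ∉ chainsOn 𝕜 Δ) ∧
    (∀ x ∈ Ch 𝕜 Γ D, bdryMap 𝕜 x ∈ chainsOn 𝕜 Δ → ∃ t : 𝕜, ∃ y ∈ Ch 𝕜 Γ (D + 1),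
      x - t • z - bdryMap 𝕜 y ∈ chainsOn 𝕜 Δ) ∧
    (Δ = ∅ ∨ (1 ≤ D ∧ Sph 𝕜 Δ (D - 1) ∧ bdryMap 𝕜 z ≠ 0))

lemma CC_bdry {A : Set (Finset U)} (hA : IsComplex A) {f : Finset U → 𝕜}
    (hf : f ∈ chainsOn 𝕜 A) : bdryMap 𝕜 f ∈ chainsOn 𝕜 A := by
  intro G hG
  rw [bdry_apply] at hG
  obtain ⟨v, hv, h⟩ := Finset.exists_ne_zero_of_sum_ne_zero hG
  exact hA _ (hf _ (right_ne_zero_of_mul h)) _ (Finset.subset_insert _ _)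

lemma CC_iv {A : Set (Finset U)} {f : Finset U → 𝕜} (v : U)
    (hf : f ∈ chainsOn 𝕜 A) : iv 𝕜 v f ∈ chainsOn 𝕜 (link A {v}) := by
  intro G hG
  rw [iv_apply] at hG
  split_ifs at hG with h
  · exact absurd rfl hG
  have h2 := hf _ (right_ne_zero_of_mul hG)
  exact ⟨by simpa using h, by simpa [← Finset.insert_eq] using h2⟩

lemma CC_cv {A : Set (Finset U)} {f : Finset U → 𝕜} (v : U)
    (hf : f ∈ chainsOn 𝕜 (link A {v})) : cv 𝕜 v f ∈ chainsOn 𝕜 A := by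
  intro G hG
  rw [cv_apply] at hG
  split_ifs at hG with h
  · have h3 := (hf _ (right_ne_zero_of_mul hG)).2
    rwa [← Finset.insert_eq, Finset.insert_erase h] at h3
  · exact absurd rfl hG

lemma CC_del {A : Set (Finset U)} {f : Finset U → 𝕜} {v : U}
    (hf : f ∈ chainsOn 𝕜 A) (h0 : iv 𝕜 v f = 0) : f ∈ chainsOn 𝕜 (del A {v}) := by
  intro G hG
  refine ⟨hf G hG, ?_⟩
  rw [Finset.disjoint_singleton_left]
  intro hv
  exact (iv_ne_zero_iff.mpr ⟨G, hv, hG⟩) h0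

lemma CC_mono {A B : Set (Finset U)} (h : A ⊆ B) {f : Finset U → 𝕜}
    (hf : f ∈ chainsOn 𝕜 A) : f ∈ chainsOn 𝕜 B := fun G hG => h (hf G hG)

lemma CC_Ch {A B : Set (Finset U)} {c : ℕ} {f : Finset U → 𝕜}
    (hf : f ∈ Ch 𝕜 B c) (hf2 : f ∈ chainsOn 𝕜 A) : f ∈ Ch 𝕜 A c :=
  fun G hG => ⟨hf2 G hG, (hf G hG).2⟩

lemma Ch_CC {A : Set (Finset U)} {c : ℕ} {f : Finset U → 𝕜}
    (hf : f ∈ Ch 𝕜 A c) : f ∈ chainsOn 𝕜 A :=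
  fun G hG => (hf G hG).1

lemma lift_link {Γ Δ : Set (Finset U)} (hΓ : IsComplex Γ) (hΔ : IsComplex Δ)
    {v : U} {c : ℕ} (h : RV 𝕜 (del Γ {v}) (del Δ {v}) c) {z : Finset U → 𝕜}
    (hz : z ∈ Ch 𝕜 (link Γ {v}) c) (hz0 : bdryMap 𝕜 z ∈ chainsOn 𝕜 (link Δ {v})) :
    ∃ x ∈ Ch 𝕜 Γ (c + 1), bdryMap 𝕜 x ∈ chainsOn 𝕜 Δ ∧ iv 𝕜 v x = z := by
  have hzd := Ch_mono (link_sub_del hΓ v) hz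
  obtain ⟨y, hy, hy2⟩ := h z hzd (CC_mono (link_sub_del hΔ v) hz0)
  refine ⟨cv 𝕜 v z - y, sub_mem (Ch_cv v hz) (Ch_mono (del_sub _) hy), ?_, ?_⟩
  · have h1 := bdry_cv (𝕜 := 𝕜) v z
    have h2 : bdryMap 𝕜 (cv 𝕜 v z - y) = (z - bdryMap 𝕜 y) - cv 𝕜 v (bdryMap 𝕜 z) := by
      rw [map_sub]; nth_rewrite 2 [← h1]; abel
    rw [h2]
    exact sub_mem (CC_mono (del_sub _) hy2) (CC_cv v hz0)
  · rw [map_sub, iv_cv_of_del hzd, iv_of_link hy, sub_zero]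

lemma RV_link {Γ Δ : Set (Finset U)} (hΓ : IsComplex Γ) (hΔ : IsComplex Δ)
    {v : U} {c : ℕ} (h : RV 𝕜 (del Γ {v}) (del Δ {v}) c) (h' : RV 𝕜 Γ Δ (c + 1)) :
    RV 𝕜 (link Γ {v}) (link Δ {v}) c := by
  intro z hz hz0
  obtain ⟨x, hx, hx0, rfl⟩ := lift_link hΓ hΔ h hz hz0
  obtain ⟨y, hy, hy2⟩ := h' x hx hx0
  refine ⟨- iv 𝕜 v y, neg_mem (Ch_iv v hy), ?_⟩
  have := CC_iv v hy2
  rwa [map_neg, bdry_iv, neg_neg, ← map_sub]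

lemma PT.pos {Γ Δ : Set (Finset U)} {D : ℕ} (h : PT 𝕜 Γ Δ D) {v : U} (hv : {v} ∈ Γ) : 1 ≤ D := by
  by_contra hD
  obtain rfl : D = 0 := by omega
  obtain ⟨_, _, _, _, _, z, hz, _, hz2, _, _⟩ := h
  refine hz2 (cv 𝕜 v z) (Ch_cv v ?_) ?_
  · intro G hG
    have := (hz G hG).2
    rw [Finset.card_eq_zero] at this
    subst this
    exact ⟨⟨by simp, by simpa using hv⟩, by simp⟩
  · have h1 := bdry_cv (𝕜 := 𝕜) v z
    rw [Ch_bdry_zero hz, map_zero, add_zero] at h1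
    rw [h1, sub_self]; exact zero_mem _

lemma PT.link {Γ Δ : Set (Finset U)} {D : ℕ} (h : PT 𝕜 Γ Δ (D + 1)) {v : U} (hv : {v} ∈ Γ) :
    PT 𝕜 (link Γ {v}) (link Δ {v}) D := by
  obtain ⟨hΓ, hΔ, hsub, hT, h0, z, hz, hz0, hz1, hz2, hz3⟩ := h
  have hdel := hT {v} hv (by simp)
  refine ⟨hΓ.link _, hΔ.link _, fun F hF => ⟨hF.1, hsub hF.2⟩, ?_, ?_, ?_⟩
  · intro T hTm hTn c
    have hvT : v ∉ T := by simpa using hTm.1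
    rw [← link_del _ _ hvT, ← link_del _ _ hvT]
    refine RV_link (hΓ.del _) (hΔ.del _) ?_ ?_
    · rw [del_del, del_del]
      refine hT _ ?_ (by simp) c
      simpa [← Finset.insert_eq] using hTm.2
    · exact hT _ (hΓ _ hTm.2 _ Finset.subset_union_right) hTn _
  · intro c hc
    exact RV_link hΓ hΔ (hdel c) (h0 _ (by omega))
  · refine ⟨iv 𝕜 v z, Ch_iv v hz, ?_, ?_, ?_, ?_⟩
    · rw [bdry_iv]; exact neg_mem (CC_iv v hz0)
    · intro y hy hcon
      set w := iv 𝕜 v z - bdryMap 𝕜 y with hw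
      have hyd : iv 𝕜 v (cv 𝕜 v y) = y := iv_cv_of_del (Ch_mono (link_sub_del hΓ v) hy)
      have hwl : w ∈ Ch 𝕜 (_root_.link Γ {v}) D :=
        sub_mem (Ch_iv v hz) (Ch_bdry (hΓ.link _) hy)
      have hwd : iv 𝕜 v (cv 𝕜 v w) = w := iv_cv_of_del (Ch_mono (link_sub_del hΓ v) hwl)
      set x := z + bdryMap 𝕜 (cv 𝕜 v y) - cv 𝕜 v w with hx
      have hx0 : iv 𝕜 v x = 0 := by
        have h1 := bdry_iv (𝕜 := 𝕜) v (cv 𝕜 v y)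
        rw [hyd] at h1
        have h2 : iv 𝕜 v (bdryMap 𝕜 (cv 𝕜 v y)) = - bdryMap 𝕜 y := by rw [h1, neg_neg]
        rw [hx, map_sub, map_add, h2, hwd, hw]; abel
      have hxc : x ∈ Ch 𝕜 (del Γ {v}) (D + 1) :=
        Ch_del (sub_mem (add_mem hz (Ch_bdry hΓ (Ch_cv v hy))) (Ch_cv v hwl)) hx0
      have hcw := CC_cv v hcon
      have hbx : bdryMap 𝕜 x ∈ chainsOn 𝕜 (del Δ {v}) := by
        apply CC_del
        · rw [hx, map_sub, map_add, bdry_bdry, add_zero]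
          exact sub_mem hz0 (CC_bdry hΔ hcw)
        · have h1 := bdry_iv (𝕜 := 𝕜) v x
          rw [hx0, map_zero] at h1
          exact neg_eq_zero.mp h1.symm
      obtain ⟨y1, hy1, hy2⟩ := hdel _ x hxc hbx
      refine hz1 (y1 - cv 𝕜 v y) (sub_mem (Ch_mono (del_sub _) hy1) (Ch_cv v hy)) ?_
      have : z - bdryMap 𝕜 (y1 - cv 𝕜 v y) = (x - bdryMap 𝕜 y1) + cv 𝕜 v w := by
        rw [map_sub, hx]; abel
      rw [this]
      exact add_mem (CC_mono (del_sub _) hy2) hcw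
    · intro x' hx' hx0'
      obtain ⟨x, hx, hx0, rfl⟩ := lift_link hΓ hΔ (hdel D) hx' hx0'
      obtain ⟨t, y, hy, hy2⟩ := hz2 x hx hx0
      refine ⟨t, - iv 𝕜 v y, neg_mem (Ch_iv v hy), ?_⟩
      have := CC_iv v hy2
      rwa [map_neg, bdry_iv, neg_neg, ← map_smul, ← map_sub, ← map_sub]
    · rcases hz3 with rfl | ⟨_, hS, hzn⟩
      · left; ext F; simp [_root_.link]
      · simp only [Nat.add_sub_cancel] at hS
        by_cases hvΔ : {v} ∈ Δ
        · right
          have hD : 1 ≤ D := by simpa using hS.2.2.1 _ hvΔ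
          obtain ⟨D, rfl⟩ : ∃ e', D = e' + 1 := ⟨D - 1, by omega⟩
          refine ⟨hD, hS.link hvΔ, ?_⟩
          rw [bdry_iv, neg_ne_zero]
          exact full_support _ Δ hS _ (CC_Ch (Ch_bdry hΓ hz) hz0) (bdry_bdry _) hzn v hvΔ
        · left
          ext F
          simp only [_root_.link, Set.mem_ofPred_eq, Set.mem_empty_iff_false, iff_false, not_and]
          intro _ hF
          exact hvΔ (hΔ _ hF _ Finset.subset_union_left)

lemma PT.links {Γ Δ : Set (Finset U)} {D : ℕ} (h : PT 𝕜 Γ Δ D) (F : Finset U) (hF : F ∈ Γ) :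
    F.card ≤ D ∧ PT 𝕜 (_root_.link Γ F) (_root_.link Δ F) (D - F.card) := by
  induction F using Finset.induction_on with
  | empty => simpa [link_empty] using h
  | insert v F hv ih =>
    obtain ⟨h1, h2⟩ := ih (h.1 _ hF _ (Finset.subset_insert _ _))
    have hvl : {v} ∈ _root_.link Γ F :=
      ⟨by simpa using hv, by rwa [Finset.union_comm, ← Finset.insert_eq]⟩
    have := h2.pos hvl
    rw [Finset.card_insert_of_notMem hv, ← link_link _ _ hv, ← link_link _ _ hv]
    refine ⟨by omega, PT.link ?_ hvl⟩
    convert h2 using 1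
    omega

lemma PT.ex_of_ne {Γ Δ : Set (Finset U)} {D : ℕ} (h : PT 𝕜 Γ Δ D) (hn : Δ.Nonempty) (c : ℕ) :
    Ex 𝕜 Γ c := by
  obtain ⟨hΓ, hΔ, hsub, -, h0, z, hz, hz0, hz1, hz2, hz3⟩ := h
  obtain ⟨hD, hS, hzn⟩ := hz3.resolve_left hn.ne_empty
  obtain ⟨D, rfl⟩ : ∃ e', D = e' + 1 := ⟨D - 1, by omega⟩
  simp only [Nat.add_sub_cancel] at hS
  have hzc : bdryMap 𝕜 z ∈ Ch 𝕜 Δ D := CC_Ch (Ch_bdry hΓ hz) hz0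
  intro x hx hx0
  have hx0' : bdryMap 𝕜 x ∈ chainsOn 𝕜 Δ := by rw [hx0]; exact zero_mem _
  by_cases hc : c = D + 1
  · subst hc
    obtain ⟨t, y, hy, hy2⟩ := hz2 x hx hx0'
    have hy3 := CC_Ch (sub_mem (sub_mem hx (Submodule.smul_mem _ t hz)) (Ch_bdry hΓ hy)) hy2
    have h4 : x - t • z - bdryMap 𝕜 y = 0 := by
      funext G
      by_contra hG
      have h1 := (hy3 G hG).2
      have h2 := hS.2.2.1 _ (hy3 G hG).1
      omega
    have h5 := congrArg (bdryMap 𝕜) h4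
    rw [map_sub, map_sub, bdry_bdry, hx0, map_smul, map_zero, sub_zero, zero_sub, neg_eq_zero] at h5
    have ht : t = 0 := (smul_eq_zero.mp h5).resolve_right hzn
    refine ⟨y, hy, ?_⟩
    rw [ht, zero_smul, sub_zero] at h4
    exact (sub_eq_zero.mp h4).symm
  · obtain ⟨y, hy, hy2⟩ := h0 c hc x hx hx0'
    have hy3 := CC_Ch (sub_mem hx (Ch_bdry hΓ hy)) hy2
    have hcy : bdryMap 𝕜 (x - bdryMap 𝕜 y) = 0 := by rw [map_sub, bdry_bdry, hx0, sub_zero]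
    by_cases hc2 : c = D
    · subst hc2
      obtain ⟨t, ht⟩ := hS.gen' hzc (bdry_bdry _) hzn hy3 hcy
      refine ⟨y + t • z, add_mem hy (Submodule.smul_mem _ _ hz), ?_⟩
      rw [map_add, map_smul, ← ht]; abel
    · obtain ⟨w, hw, hw2⟩ := hS.ex hc2 _ hy3 hcy
      refine ⟨y + w, add_mem hy (Ch_mono hsub hw), ?_⟩
      rw [map_add, hw2]; abel

lemma CC_empty {f : Finset U → 𝕜} (hf : f ∈ chainsOn 𝕜 (∅ : Set (Finset U))) : f = 0 := by
  funext G
  by_contra h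
  exact hf G h

lemma PT.of_empty {Γ : Set (Finset U)} {D : ℕ} (h : PT 𝕜 Γ ∅ D) :
    (∀ c, c ≠ D → Ex 𝕜 Γ c) ∧ ∃ z ∈ Ch 𝕜 Γ D, bdryMap 𝕜 z = 0 ∧
      (∀ y ∈ Ch 𝕜 Γ (D + 1), bdryMap 𝕜 y ≠ z) ∧
      ∀ x ∈ Ch 𝕜 Γ D, bdryMap 𝕜 x = 0 → ∃ t : 𝕜, ∃ y ∈ Ch 𝕜 Γ (D + 1),
        x = t • z + bdryMap 𝕜 y := by
  obtain ⟨hΓ, hΔ, hsub, -, h0, z, hz, hz0, hz1, hz2, hz3⟩ := h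
  refine ⟨fun c hc x hx hx0 => ?_, z, hz, CC_empty hz0, ?_, ?_⟩
  · obtain ⟨y, hy, hy2⟩ := h0 c hc x hx (by rw [hx0]; exact zero_mem _)
    exact ⟨y, hy, (sub_eq_zero.mp (CC_empty hy2)).symm⟩
  · intro y hy h
    refine hz1 y hy ?_
    rw [h, sub_self]; exact zero_mem _
  · intro x hx hx0
    obtain ⟨t, y, hy, hy2⟩ := hz2 x hx (by rw [hx0]; exact zero_mem _)
    refine ⟨t, y, hy, ?_⟩
    have := CC_empty hy2
    rw [sub_sub] at this
    exact sub_eq_zero.mp this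

end Top3

open Finset
set_option linter.unusedSectionVars false

section Top4
variable {𝕜 : Type*} [Field 𝕜] [CharZero 𝕜] {U : Type*} [Fintype U] [LinearOrder U]

lemma finrank_redH (A : Set (Finset U)) (c : ℕ) :
    Module.finrank 𝕜 (redH 𝕜 A c) = Module.finrank 𝕜 (↥(redCycles 𝕜 A c) ⧸
    Submodule.comap (redCycles 𝕜 A c).subtype (redBdries 𝕜 A c)) := rfl

lemma mem_redCycles {A : Set (Finset U)} {c : ℕ} {z : Finset U → 𝕜} :
    z ∈ redCycles 𝕜 A c ↔ z ∈ Ch 𝕜 A c ∧ bdryMap 𝕜 z = 0 := Iff.rfl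

lemma mem_redBdries {A : Set (Finset U)} {c : ℕ} {z : Finset U → 𝕜} :
    z ∈ redBdries 𝕜 A c ↔ ∃ y ∈ Ch 𝕜 A (c + 1), bdryMap 𝕜 y = z := Iff.rfl

lemma finrank_zero_iff (A : Set (Finset U)) (c : ℕ) :
    Module.finrank 𝕜 (redH 𝕜 A c) = 0 ↔ Ex 𝕜 A c := by
  rw [finrank_redH, Module.finrank_zero_iff, Submodule.Quotient.subsingleton_iff,
    Submodule.eq_top_iff']
  constructor
  · intro h z hz hz0
    exact h ⟨z, hz, hz0⟩
  · rintro h ⟨z, hz, hz0⟩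
    exact h z hz hz0

lemma finrank_one_of (A : Set (Finset U)) (c : ℕ) {z : Finset U → 𝕜} (hz : z ∈ Ch 𝕜 A c)
    (hz0 : bdryMap 𝕜 z = 0) (hzn : ∀ y ∈ Ch 𝕜 A (c + 1), bdryMap 𝕜 y ≠ z)
    (hgen : ∀ x ∈ Ch 𝕜 A c, bdryMap 𝕜 x = 0 → ∃ t : 𝕜, ∃ y ∈ Ch 𝕜 A (c + 1),
        x = t • z + bdryMap 𝕜 y) : Module.finrank 𝕜 (redH 𝕜 A c) = 1 := by
  rw [finrank_redH]
  refine finrank_eq_one (Submodule.Quotient.mk ⟨z, hz, hz0⟩) ?_ ?_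
  · intro h
    rw [Submodule.Quotient.mk_eq_zero] at h
    obtain ⟨y, hy, h⟩ := h
    exact hzn y hy h
  · intro w
    obtain ⟨⟨x, hx, hx0⟩, rfl⟩ := Submodule.Quotient.mk_surjective _ w
    obtain ⟨t, y, hy, rfl⟩ := hgen x hx hx0
    refine ⟨t, ?_⟩
    rw [← Submodule.Quotient.mk_smul, Submodule.Quotient.eq]
    refine ⟨-y, neg_mem hy, ?_⟩
    simp

lemma gen_of_finrank_one (A : Set (Finset U)) (c : ℕ) (hA : ∀ F ∈ A, F.card ≤ c)
    (h : Module.finrank 𝕜 (redH 𝕜 A c) = 1) :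
    ∃ g ∈ Ch 𝕜 A c, bdryMap 𝕜 g = 0 ∧ g ≠ 0 ∧
      ∀ z ∈ Ch 𝕜 A c, bdryMap 𝕜 z = 0 → ∃ t : 𝕜, z = t • g := by
  rw [finrank_redH, finrank_eq_one_iff'] at h
  obtain ⟨w, hw, hgen⟩ := h
  obtain ⟨⟨x, hx, hx0⟩, rfl⟩ := Submodule.Quotient.mk_surjective _ w
  have hb : ∀ y ∈ Ch 𝕜 A (c + 1), y = 0 := by
    intro y hy
    funext G
    by_contra hG
    have h1 := (hy G hG).2
    have h2 := hA _ (hy G hG).1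
    omega
  refine ⟨x, hx, hx0, ?_, ?_⟩
  · rintro rfl
    exact hw ((Submodule.Quotient.mk_eq_zero _).mpr (zero_mem _))
  · intro z hz hz0
    obtain ⟨t, ht⟩ := hgen (Submodule.Quotient.mk ⟨z, hz, hz0⟩)
    rw [← Submodule.Quotient.mk_smul, Submodule.Quotient.eq] at ht
    obtain ⟨y, hy, h⟩ := ht
    refine ⟨t, ?_⟩
    rw [hb y hy, map_zero] at h
    simp only [Submodule.subtype_apply, Submodule.coe_sub, Submodule.coe_smul] at h
    exact (sub_eq_zero.mp h.symm).symm

lemma Sph_of_sphere {Δ : Set (Finset U)} {d : ℕ} (hd : 1 ≤ d)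
    (h : IsHomologySphere 𝕜 Δ (d - 1)) : Sph 𝕜 Δ d := by
  obtain ⟨h1, h2, ⟨F0, hF0, _⟩, h4⟩ := h
  rw [Nat.sub_add_cancel hd] at h2 
  refine ⟨h1, h1 _ hF0 _ (Finset.empty_subset _), h2, fun F hF => ⟨?_, ?_⟩⟩
  · intro c hc
    rw [← finrank_zero_iff, h4 F hF, Nat.sub_add_cancel hd, if_neg hc]
  · apply gen_of_finrank_one
    · intro G hG
      have := h2 _ hG.2
      rw [Finset.card_union_of_disjoint hG.1] at this
      omega
    · have := h2 F hF
      rw [h4 F hF, if_pos]; omega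

lemma link_eq_empty {Δ : Set (Finset U)} (hΔ : IsComplex Δ) {F : Finset U} (hF : F ∉ Δ) :
    link Δ F = ∅ := by
  ext G
  simp only [link, Set.mem_ofPred_eq, Set.mem_empty_iff_false, iff_false, not_and]
  intro _ h
  exact hF (hΔ _ h _ Finset.subset_union_left)

lemma PT_top {Γ Δ : Set (Finset U)} {d r : ℕ} (hS : Sph 𝕜 Δ d) (hΓ : IsComplex Γ)
    (hsub : Δ ⊆ Γ) (hr1 : 1 ≤ r) (hr2 : 2 * r ≤ d)
    (hsm : ∀ F ∈ Γ, F.card ≤ r → F ∈ Δ)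
    (hL : ∀ (T : Finset U) (c : ℕ), r ≤ c → Ex 𝕜 (del Γ T) c)
    (hA : ∀ F ∈ Γ, F.card ≤ d - r + 1 → F ∈ Δ) : PT 𝕜 Γ Δ (d + 1) := by
  have hΔ := hS.1
  -- general argument
  have key : ∀ (T : Finset U) (c : ℕ), (d - r + 2 ≤ c → Ex 𝕜 (del Δ T) (c - 1)) →
      RV 𝕜 (del Γ T) (del Δ T) c := by
    intro T c hex z hz hz0
    by_cases hc : c ≤ d - r + 1
    · refine ⟨0, zero_mem _, ?_⟩
      rw [map_zero, sub_zero]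
      intro G hG
      obtain ⟨h1, h2⟩ := hz G hG
      exact ⟨hA _ h1.1 (by omega), h1.2⟩
    · obtain ⟨c, rfl⟩ : ∃ e', c = e' + 1 := ⟨c - 1, by omega⟩
      obtain ⟨x, hx, hx2⟩ := hex (by omega) _ (CC_Ch (Ch_bdry (hΓ.del _) hz) hz0) (bdry_bdry _)
      simp only [Nat.add_sub_cancel] at hx
      have hx' : x ∈ Ch 𝕜 (del Γ T) (c + 1) :=
        Ch_mono (A := del Δ T) (B := del Γ T) (fun F hF => ⟨hsub hF.1, hF.2⟩) hx
      obtain ⟨y, hy, hy2⟩ := hL T (c + 1) (by omega) (z - x) (sub_mem hz hx')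
        (by rw [map_sub, hx2, sub_self])
      refine ⟨y, hy, ?_⟩
      rw [hy2, sub_sub_cancel]
      exact Ch_CC hx
  obtain ⟨g, hg, hg0, hgn, hgen⟩ := hS.gen
  obtain ⟨z, hz, hzg⟩ := hL ∅ d (by omega) g (by rw [del_empty]; exact Ch_mono hsub hg) hg0
  rw [del_empty] at hz
  refine ⟨hΓ, hΔ, hsub, ?_, ?_, z, hz, ?_, ?_, ?_, ?_⟩
  · intro T hT hTn c
    refine key T c fun hc => ?_
    exact AD T hTn Δ d r (c - 1) hS (fun F hF hFc => hsm F (hΓ T hT F hF) hFc) (by omega)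
  · intro c hc
    have := key ∅ c (fun _ => by
      rw [del_empty]
      exact hS.ex (by omega))
    rwa [del_empty, del_empty] at this
  · rw [hzg]; exact Ch_CC hg
  · intro y hy hcon
    have h1 := CC_Ch (sub_mem hz (Ch_bdry hΓ hy)) hcon
    have h2 : z - bdryMap 𝕜 y = 0 := by
      funext G
      by_contra hG
      have h3 := (h1 G hG).2
      have h4 := hS.2.2.1 _ (h1 G hG).1
      omega
    have h5 := congrArg (bdryMap 𝕜) h2
    rw [map_sub, bdry_bdry, hzg, sub_zero, map_zero] at h5
    exact hgn h5
  · intro x hx hx0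
    obtain ⟨t, ht⟩ := hgen _ (CC_Ch (Ch_bdry hΓ hx) hx0) (bdry_bdry _)
    obtain ⟨y, hy, hy2⟩ := hL ∅ (d + 1) (by omega) (x - t • z)
      (by rw [del_empty]; exact sub_mem hx (Submodule.smul_mem _ _ hz))
      (by rw [map_sub, map_smul, hzg, ht, sub_self])
    rw [del_empty] at hy
    exact ⟨t, y, hy, by rw [hy2, sub_self]; exact zero_mem _⟩
  · right
    exact ⟨by omega, hS, by rw [hzg]; exact hgn⟩

theorem ball_of_top {Γ Δ : Set (Finset U)} {d r : ℕ} (hsph : IsHomologySphere 𝕜 Δ (d - 1))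
    (hΓ : IsComplex Γ)
    (hsub : Δ ⊆ Γ) (hr1 : 1 ≤ r) (hr2 : 2 * r ≤ d)
    (hsm : ∀ F ∈ Γ, F.card ≤ r → F ∈ Δ)
    (hL : ∀ (T : Finset U) (c : ℕ), r ≤ c → Ex 𝕜 (del Γ T) c)
    (hA : ∀ F ∈ Γ, F.card ≤ d - r + 1 → F ∈ Δ) :
    IsHomologyBall 𝕜 Γ d ∧ bdryFaces 𝕜 Γ d = Δ := by
  have hS := Sph_of_sphere (by omega) hsph
  have hP := PT_top hS hΓ hsub hr1 hr2 hsm hL hA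
  have hin : ∀ F ∈ Γ, F ∉ Δ → ∀ c, Module.finrank 𝕜 (redH 𝕜 (link Γ F) c) =
      if c + F.card = d + 1 then 1 else 0 := by
    intro F hF hFΔ c
    obtain ⟨h1, h2⟩ := hP.links F hF
    rw [link_eq_empty hS.1 hFΔ] at h2
    obtain ⟨h3, z, hz, hz0, hz1, hz2⟩ := h2.of_empty
    split_ifs with hc
    · obtain rfl : c = d + 1 - F.card := by omega
      exact finrank_one_of _ _ hz hz0 hz1 hz2
    · rw [finrank_zero_iff]
      exact h3 _ (by omega)
  have hbd : ∀ F ∈ Δ, ∀ c, Module.finrank 𝕜 (redH 𝕜 (link Γ F) c) = 0 := by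
    intro F hF c
    rw [finrank_zero_iff]
    exact (hP.links F (hsub hF)).2.ex_of_ne ⟨∅, by simp, by simpa using hF⟩ c
  have hbf : bdryFaces 𝕜 Γ d = Δ := by
    ext F
    constructor
    · rintro ⟨h1, h2⟩
      by_contra hF
      have := (hP.links F h1).1
      rw [hin F h1 hF, if_pos (by omega)] at h2
      exact one_ne_zero h2
    · intro hF
      exact ⟨hsub hF, hbd F hF _⟩
  refine ⟨⟨hΓ, fun F hF => (hP.links F hF).1, ?_, ?_, by rwa [hbf]⟩, hbf⟩
  · obtain ⟨_, _, _, _, _, z, hz, _, hz1, _⟩ := hP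
    have : z ≠ 0 := by
      rintro rfl
      refine hz1 0 (zero_mem _) ?_
      simp
    obtain ⟨G, hG⟩ := Function.ne_iff.mp this
    exact ⟨G, hz G hG⟩
  · intro F hF c
    by_cases hFΔ : F ∈ Δ
    · rw [hbd F hFΔ]; simp
    · rw [hin F hF hFΔ]
      split_ifs with h <;> simp [h]

end Top4

open Finset
set_option linter.unusedSectionVars false

section Alg1
open MvPolynomial
variable {𝕜 : Type*} [Field 𝕜] {U : Type*} [Fintype U] [LinearOrder U]

lemma hc_mul {a s : MvPolynomial U 𝕜} {k : ℕ} (hs : s.IsHomogeneous k) (n : ℕ) :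
    homogeneousComponent (n + k) (a * s) = homogeneousComponent n a * s := by
  conv_lhs => rw [← sum_homogeneousComponent a]
  rw [Finset.sum_mul, map_sum]
  have h1 : ∀ i ∈ Finset.range (a.totalDegree + 1),
      homogeneousComponent (n + k) (homogeneousComponent i a * s) =
        if n = i then homogeneousComponent n a * s else 0 := by
    intro i _
    rw [homogeneousComponent_of_mem (m := n + k) (n := i + k)
      (by
        have := (homogeneousComponent_isHomogeneous i a).mul hs
        exact this)]
    by_cases h : n = i
    · subst h; simp
    · rw [if_neg h, if_neg (by omega)]
  rw [Finset.sum_congr rfl h1, Finset.sum_ite_eq]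
  split_ifs with h
  · rfl
  · rw [homogeneousComponent_eq_zero _ _ (by simpa using h), zero_mul]

lemma hc_mul_lt {a s : MvPolynomial U 𝕜} {k : ℕ} (hs : s.IsHomogeneous k) {n : ℕ} (hn : n < k) :
    homogeneousComponent n (a * s) = 0 := by
  conv_lhs => rw [← sum_homogeneousComponent a]
  rw [Finset.sum_mul, map_sum]
  refine Finset.sum_eq_zero fun i _ => ?_
  rw [homogeneousComponent_of_mem (m := n) (n := i + k)
      (by
        have := (homogeneousComponent_isHomogeneous i a).mul hs
        exact this), if_neg (by omega)]

/-- generated by homogeneous elements of degree at most `r` -/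
def HGen (r : ℕ) (K : Ideal (MvPolynomial U 𝕜)) : Prop :=
  ∃ Gs : Set (MvPolynomial U 𝕜), K = Ideal.span Gs ∧ ∀ s ∈ Gs, ∃ k ≤ r, s.IsHomogeneous k

lemma HGen.homog {r : ℕ} {K : Ideal (MvPolynomial U 𝕜)} (h : HGen r K) : IsHomogIdeal 𝕜 K := by
  obtain ⟨Gs, rfl, hG⟩ := h
  intro f hf i
  induction hf using Submodule.closure_induction with
  | zero => rw [map_zero]; exact zero_mem _
  | add x y hx hy h1 h2 => rw [map_add]; exact add_mem h1 h2
  | smul_mem a s hs =>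
    obtain ⟨k, _, hk⟩ := hG s hs
    rw [smul_eq_mul]
    rcases le_or_gt k i with hki | hki
    · obtain ⟨n, rfl⟩ : ∃ n, i = n + k := ⟨i - k, by omega⟩
      rw [hc_mul hk]
      exact Ideal.mul_mem_left _ _ (Ideal.subset_span hs)
    · rw [hc_mul_lt hk hki]; exact zero_mem _

lemma HGen.sup {r : ℕ} {K : Ideal (MvPolynomial U 𝕜)} (h : HGen r K) (hr : 1 ≤ r)
    {u : MvPolynomial U 𝕜} (hu : u.IsHomogeneous 1) : HGen r (K ⊔ Ideal.span {u}) := by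
  obtain ⟨Gs, rfl, hG⟩ := h
  refine ⟨Gs ∪ {u}, (Ideal.span_union _ _).symm, ?_⟩
  rintro s (hs | hs)
  · exact hG s hs
  · rw [Set.mem_singleton_iff] at hs
    subst hs
    exact ⟨1, hr, hu⟩

lemma euler_inv [CharZero 𝕜] {b : MvPolynomial U 𝕜} {n : ℕ} (hb : b.IsHomogeneous (n + 1)) :
    b = ∑ v, X v * (((n + 1 : 𝕜)⁻¹) • pderiv v b) := by
  have h := hb.sum_X_mul_pderiv
  simp only [mul_smul_comm, ← Finset.smul_sum]
  rw [h, ← Nat.cast_smul_eq_nsmul 𝕜, smul_smul]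
  push_cast
  rw [inv_mul_cancel₀ (by exact_mod_cast Nat.succ_ne_zero n), one_smul]

lemma IsHomogeneous_smul {b : MvPolynomial U 𝕜} {n : ℕ} (hb : b.IsHomogeneous n) (c : 𝕜) :
    (c • b).IsHomogeneous n := (homogeneousSubmodule U 𝕜 n).smul_mem c hb

lemma pderiv_hom {b : MvPolynomial U 𝕜} {n : ℕ} (hb : b.IsHomogeneous (n + 1)) (v : U) :
    (pderiv v b).IsHomogeneous n := by
  simpa using hb.pderiv (i := v)

lemma HGen.lin [CharZero 𝕜] {r : ℕ} {K : Ideal (MvPolynomial U 𝕜)} (h : HGen r K) {e : ℕ}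
    (he : r ≤ e) {f : MvPolynomial U 𝕜} (hf : f ∈ K) (hfe : f.IsHomogeneous (e + 1)) :
    ∃ g : U → MvPolynomial U 𝕜, (∀ v, g v ∈ K) ∧ (∀ v, (g v).IsHomogeneous e) ∧
      f = ∑ v, X v * g v := by
  obtain ⟨Gs, rfl, hG⟩ := h
  suffices ∃ g : U → MvPolynomial U 𝕜, (∀ v, g v ∈ Ideal.span Gs) ∧
      (∀ v, (g v).IsHomogeneous e) ∧ homogeneousComponent (e + 1) f = ∑ v, X v * g v by
    rwa [homogeneousComponent_eq_self hfe] at this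
  clear hfe
  induction hf using Submodule.closure_induction with
  | zero => exact ⟨0, by simp, fun v => isHomogeneous_zero _ _ _, by simp⟩
  | add x y hx hy h1 h2 =>
    obtain ⟨g1, a1, b1, c1⟩ := h1
    obtain ⟨g2, a2, b2, c2⟩ := h2
    refine ⟨g1 + g2, fun v => add_mem (a1 v) (a2 v), fun v => (b1 v).add (b2 v), ?_⟩
    rw [map_add, c1, c2, ← Finset.sum_add_distrib]
    simp [mul_add]
  | smul_mem a s hs =>
    obtain ⟨k, hkr, hk⟩ := hG s hs
    obtain ⟨n, hn⟩ : ∃ n, e = n + k := ⟨e - k, by omega⟩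
    subst hn
    rw [smul_eq_mul, show n + k + 1 = n + 1 + k by omega, hc_mul hk]
    set b := homogeneousComponent (n + 1) a with hb
    have hbh : b.IsHomogeneous (n + 1) := homogeneousComponent_isHomogeneous _ _
    refine ⟨fun v => (((n + 1 : 𝕜)⁻¹) • pderiv v b) * s, fun v => ?_, fun v => ?_, ?_⟩
    · exact Ideal.mul_mem_left _ _ (Ideal.subset_span hs)
    · exact (IsHomogeneous_smul (pderiv_hom hbh v) _).mul hk
    · conv_lhs => rw [euler_inv hbh]
      rw [Finset.sum_mul]
      simp only [mul_assoc]

lemma split_u {K : Ideal (MvPolynomial U 𝕜)} (hK : IsHomogIdeal 𝕜 K) {u x : MvPolynomial U 𝕜}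
    (hu : u.IsHomogeneous 1) {e : ℕ} (hx : x ∈ K ⊔ Ideal.span {u})
    (hxe : x.IsHomogeneous (e + 1)) :
    ∃ ξ : MvPolynomial U 𝕜, ξ.IsHomogeneous e ∧ x - u * ξ ∈ K := by
  rw [Submodule.mem_sup] at hx
  obtain ⟨k, hk, y, hy, rfl⟩ := hx
  rw [Ideal.mem_span_singleton'] at hy
  obtain ⟨c, rfl⟩ := hy
  refine ⟨homogeneousComponent e c, homogeneousComponent_isHomogeneous _ _, ?_⟩
  have h1 := homogeneousComponent_eq_self hxe
  rw [map_add, hc_mul hu] at h1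
  rw [← h1, mul_comm u, add_sub_cancel_right]
  exact hK _ hk _

lemma split_u0 {K : Ideal (MvPolynomial U 𝕜)} (hK : IsHomogIdeal 𝕜 K) {u x : MvPolynomial U 𝕜}
    (hu : u.IsHomogeneous 1) (hx : x ∈ K ⊔ Ideal.span {u})
    (hxe : x.IsHomogeneous 0) : x ∈ K := by
  rw [Submodule.mem_sup] at hx
  obtain ⟨k, hk, y, hy, rfl⟩ := hx
  rw [Ideal.mem_span_singleton'] at hy
  obtain ⟨c, rfl⟩ := hy
  have h1 := homogeneousComponent_eq_self hxe
  rw [map_add, hc_mul_lt hu (by omega), add_zero] at h1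
  rw [← h1]
  exact hK _ hk _

lemma linear_form {u : MvPolynomial U 𝕜} (hu : u.IsHomogeneous 1) :
    ∃ a : U → 𝕜, u = ∑ v, a v • X v := by
  have h : u ∈ homogeneousSubmodule U 𝕜 1 := hu
  rw [homogeneousSubmodule_one_eq_span_X, Submodule.mem_span_range_iff_exists_fun] at h
  obtain ⟨a, ha⟩ := h
  exact ⟨a, ha.symm⟩

/-- multiplication by the variable -/
noncomputable def mX (𝕜 : Type*) [Field 𝕜] {U : Type*} (v : U) :
    MvPolynomial U 𝕜 →ₗ[𝕜] MvPolynomial U 𝕜 := LinearMap.mulLeft 𝕜 (X v)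

/-- Koszul differential -/
noncomputable def KD (𝕜 : Type*) [Field 𝕜] {U : Type*} [Fintype U] [LinearOrder U] :
    (Finset U → MvPolynomial U 𝕜) →ₗ[𝕜] (Finset U → MvPolynomial U 𝕜) := kd (mX 𝕜)

/-- wedge with a linear form with coefficients `a` -/
noncomputable def WU {𝕜 : Type*} [Field 𝕜] {U : Type*} [Fintype U] [LinearOrder U] (a : U → 𝕜) :
    (Finset U → MvPolynomial U 𝕜) →ₗ[𝕜] (Finset U → MvPolynomial U 𝕜) :=
  kw (fun v => a v • LinearMap.id)

/-- de Rham differential -/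
noncomputable def DR (𝕜 : Type*) [Field 𝕜] {U : Type*} [Fintype U] [LinearOrder U] :
    (Finset U → MvPolynomial U 𝕜) →ₗ[𝕜] (Finset U → MvPolynomial U 𝕜) :=
  kw (fun v => (pderiv v).toLinearMap)

lemma KD_apply (f : Finset U → MvPolynomial U 𝕜) (G : Finset U) :
    KD 𝕜 f G = ∑ v ∈ Gᶜ, sg 𝕜 v G • (X v * f (insert v G)) := rfl

lemma WU_apply (a : U → 𝕜) (f : Finset U → MvPolynomial U 𝕜) (G : Finset U) :
    WU a f G = ∑ v ∈ G, sg 𝕜 v (G.erase v) • (a v • f (G.erase v)) := rfl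

lemma DR_apply (f : Finset U → MvPolynomial U 𝕜) (G : Finset U) :
    DR 𝕜 f G = ∑ v ∈ G, sg 𝕜 v (G.erase v) • (pderiv v (f (G.erase v))) := rfl

lemma KD_KD [CharZero 𝕜] (f : Finset U → MvPolynomial U 𝕜) : KD 𝕜 (KD 𝕜 f) = 0 :=
  kd_kd_self (mX 𝕜) (fun u v x => by simp [mX, mul_left_comm]) f

lemma KD_WU (a : U → 𝕜) (f : Finset U → MvPolynomial U 𝕜) (G : Finset U) :
    KD 𝕜 (WU a f) G + WU a (KD 𝕜 f) G = (∑ v, a v • X v) * f G := by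
  unfold KD WU
  rw [kd_kw _ _ (fun u v x _ => by simp [mX])]
  rw [Finset.sum_mul, add_comm, Finset.sum_congr rfl, Finset.sum_congr (s₁ := Gᶜ) rfl,
    Finset.sum_add_sum_compl]
  · intro x _; simp [mX]
  · intro x _; simp [mX]

lemma KD_DR {n : ℕ} (f : Finset U → MvPolynomial U 𝕜) (hf : ∀ G, (f G).IsHomogeneous n)
    (G : Finset U) :
    KD 𝕜 (DR 𝕜 f) G + DR 𝕜 (KD 𝕜 f) G = (n + G.card) • f G := by
  unfold KD DR
  rw [kd_kw _ _ (fun u v x huv => by simp [mX, pderiv_X_of_ne huv])]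
  have h : ∀ v ∈ G, (pderiv v).toLinearMap (mX 𝕜 v (f G)) = X v * pderiv v (f G) + f G := by
    intro v _; simp [mX]
  rw [Finset.sum_congr rfl h, Finset.sum_add_distrib, ← add_assoc, add_smul,
    ← (hf G).sum_X_mul_pderiv, Finset.sum_const]
  congr 1
  rw [add_comm]
  exact Finset.sum_add_sum_compl G (fun v => X v * pderiv v (f G))

/-- pointwise homogeneous -/
def HC (f : Finset U → MvPolynomial U 𝕜) (e : ℕ) : Prop := ∀ G, (f G).IsHomogeneous e

/-- pointwise in `K` -/
def MK (K : Ideal (MvPolynomial U 𝕜)) (f : Finset U → MvPolynomial U 𝕜) : Prop := ∀ G, f G ∈ K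

lemma smul_memK {K : Ideal (MvPolynomial U 𝕜)} {x : MvPolynomial U 𝕜} (c : 𝕜) (h : x ∈ K) :
    c • x ∈ K := Submodule.smul_of_tower_mem K c h

lemma HC.KD {f : Finset U → MvPolynomial U 𝕜} {e : ℕ} (h : HC f e) : HC (KD 𝕜 f) (e + 1) := by
  intro G
  rw [KD_apply]
  refine IsHomogeneous.sum _ _ _ fun v _ => IsHomogeneous_smul ?_ _
  rw [add_comm]
  exact (isHomogeneous_X _ _).mul (h _)

lemma HC.WU {f : Finset U → MvPolynomial U 𝕜} {e : ℕ} (h : HC f e) (a : U → 𝕜) :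
    HC (WU a f) e := by
  intro G
  rw [WU_apply]
  exact IsHomogeneous.sum _ _ _ fun v _ => IsHomogeneous_smul (IsHomogeneous_smul (h _) _) _

lemma HC.DR {f : Finset U → MvPolynomial U 𝕜} {e : ℕ} (h : HC f (e + 1)) :
    HC (DR 𝕜 f) e := by
  intro G
  rw [DR_apply]
  exact IsHomogeneous.sum _ _ _ fun v _ => IsHomogeneous_smul (pderiv_hom (h _) _) _

lemma MK.KD {K : Ideal (MvPolynomial U 𝕜)} {f : Finset U → MvPolynomial U 𝕜} (h : MK K f) :
    MK K (KD 𝕜 f) := by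
  intro G
  rw [KD_apply]
  exact sum_mem fun v _ => smul_memK _ (K.mul_mem_left _ (h _))

lemma MK.WU {K : Ideal (MvPolynomial U 𝕜)} {f : Finset U → MvPolynomial U 𝕜} (h : MK K f)
    (a : U → 𝕜) : MK K (WU a f) := by
  intro G
  rw [WU_apply]
  exact sum_mem fun v _ => smul_memK _ (smul_memK _ (h _))

lemma KD_mul (u : MvPolynomial U 𝕜) (f : Finset U → MvPolynomial U 𝕜) (G : Finset U) :
    KD 𝕜 (fun G => u * f G) G = u * KD 𝕜 f G := by
  simp only [KD_apply, Finset.mul_sum, mul_smul_comm]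
  refine Finset.sum_congr rfl fun v _ => ?_
  rw [mul_left_comm]

end Alg1

open Finset
set_option linter.unusedSectionVars false

section Alg2
open MvPolynomial
variable {𝕜 : Type*} [Field 𝕜] [CharZero 𝕜] {U : Type*} [Fintype U] [LinearOrder U]

/-- Koszul exactness modulo `K` in coefficient degrees at least `r` -/
def PK (r : ℕ) (K : Ideal (MvPolynomial U 𝕜)) : Prop :=
  ∀ e, r ≤ e + 1 → ∀ f : Finset U → MvPolynomial U 𝕜, HC f (e + 1) → MK K (KD 𝕜 f) →
    ∃ g, HC g e ∧ MK K (f - KD 𝕜 g)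

/-- injectivity of `u` modulo `K` in degree `n` -/
def INJ (K : Ideal (MvPolynomial U 𝕜)) (u : MvPolynomial U 𝕜) (n : ℕ) : Prop :=
  ∀ m : MvPolynomial U 𝕜, m.IsHomogeneous n → u * m ∈ K → m ∈ K

/-- a chain supported on singletons -/
def Sing (f : Finset U → MvPolynomial U 𝕜) : Prop := ∀ G, G.card ≠ 1 → f G = 0

lemma Sing.KD_ne {f : Finset U → MvPolynomial U 𝕜} (hf : Sing f) {G : Finset U} (hG : G ≠ ∅) :
    KD 𝕜 f G = 0 := by
  rw [KD_apply]
  refine Finset.sum_eq_zero fun v hv => ?_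
  rw [hf, mul_zero, smul_zero]
  rw [Finset.card_insert_of_notMem (by simpa using hv)]
  have := Finset.card_pos.mpr (Finset.nonempty_iff_ne_empty.mpr hG)
  omega

lemma KD_empty (f : Finset U → MvPolynomial U 𝕜) : KD 𝕜 f ∅ = ∑ v, X v * f {v} := by
  rw [KD_apply]
  simp [sg]

/-- the singleton chain with given coefficients -/
noncomputable def mkS (g : U → MvPolynomial U 𝕜) : Finset U → MvPolynomial U 𝕜 :=
  fun G => if G.card = 1 then ∑ v ∈ G, g v else 0

lemma mkS_sing (g : U → MvPolynomial U 𝕜) : Sing (mkS g) := fun _ hG => if_neg hG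

lemma mkS_apply (g : U → MvPolynomial U 𝕜) (v : U) : mkS g {v} = g v := by simp [mkS]

lemma mkS_HC {g : U → MvPolynomial U 𝕜} {e : ℕ} (h : ∀ v, (g v).IsHomogeneous e) :
    HC (mkS g) e := by
  intro G
  unfold mkS
  split_ifs
  · exact IsHomogeneous.sum _ _ _ fun v _ => h v
  · exact isHomogeneous_zero _ _ _

lemma mkS_MK {K : Ideal (MvPolynomial U 𝕜)} {g : U → MvPolynomial U 𝕜} (h : ∀ v, g v ∈ K) :
    MK K (mkS g) := by
  intro G
  unfold mkS
  split_ifs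
  · exact sum_mem fun v _ => h v
  · exact zero_mem _

lemma HC.sub' {f g : Finset U → MvPolynomial U 𝕜} {e : ℕ} (hf : HC f e) (hg : HC g e) :
    HC (f - g) e := fun G => (hf G).sub (hg G)

lemma HC.add' {f g : Finset U → MvPolynomial U 𝕜} {e : ℕ} (hf : HC f e) (hg : HC g e) :
    HC (f + g) e := fun G => (hf G).add (hg G)

lemma H1 {r : ℕ} {K : Ideal (MvPolynomial U 𝕜)} (hK : HGen r K) {e : ℕ} (he : r ≤ e + 1)
    {f : Finset U → MvPolynomial U 𝕜} (hf : HC f (e + 1)) (hs : Sing f) (hk : KD 𝕜 f ∅ ∈ K) :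
    ∃ τ, HC τ e ∧ MK K (f - KD 𝕜 τ) := by
  obtain ⟨g, hgK, hge, hg⟩ := hK.lin he hk (hf.KD _)
  set h := f - mkS g with hh
  have hhe : HC h (e + 1) := hf.sub' (mkS_HC hge)
  have hhs : Sing h := fun G hG => by rw [hh, Pi.sub_apply, hs G hG, mkS_sing g G hG, sub_zero]
  have hh0 : KD 𝕜 h = 0 := by
    funext G
    by_cases hG : G = ∅
    · subst hG
      rw [hh, map_sub, Pi.sub_apply, hg, KD_empty]
      simp [mkS_apply]
    · exact hhs.KD_ne hG
  refine ⟨((e + 2 : 𝕜)⁻¹) • DR 𝕜 h, fun G => IsHomogeneous_smul (hhe.DR G) _, ?_⟩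
  have key : KD 𝕜 (((e + 2 : 𝕜)⁻¹) • DR 𝕜 h) = h := by
    rw [map_smul]
    funext G
    have h1 := KD_DR h hhe G
    rw [hh0, map_zero, Pi.zero_apply, add_zero] at h1
    rw [Pi.smul_apply, h1]
    by_cases hG : G.card = 1
    · rw [hG, ← Nat.cast_smul_eq_nsmul 𝕜, smul_smul]
      have : ((e + 1 + 1 : ℕ) : 𝕜) = e + 2 := by push_cast; ring
      rw [this, inv_mul_cancel₀, one_smul]
      exact_mod_cast Nat.succ_ne_zero (e + 1)
    · rw [hhs G hG, smul_zero, smul_zero]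
  rw [key, hh, sub_sub_cancel]
  exact mkS_MK hgK

lemma choose_split {K : Ideal (MvPolynomial U 𝕜)} (hK : IsHomogIdeal 𝕜 K) {u : MvPolynomial U 𝕜}
    (hu : u.IsHomogeneous 1) {e : ℕ} {f : Finset U → MvPolynomial U 𝕜} (hf : HC f (e + 1))
    (hfK : MK (K ⊔ Ideal.span {u}) f) :
    ∃ ξ : Finset U → MvPolynomial U 𝕜, HC ξ e ∧ MK K (f - fun G => u * ξ G) := by
  choose ξ h1 h2 using fun G => split_u hK hu (hfK G) (hf G)
  exact ⟨ξ, h1, h2⟩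

lemma MK.add {K : Ideal (MvPolynomial U 𝕜)} {f g : Finset U → MvPolynomial U 𝕜} (hf : MK K f)
    (hg : MK K g) : MK K (f + g) := fun G => add_mem (hf G) (hg G)

lemma MK.sub {K : Ideal (MvPolynomial U 𝕜)} {f g : Finset U → MvPolynomial U 𝕜} (hf : MK K f)
    (hg : MK K g) : MK K (f - g) := fun G => sub_mem (hf G) (hg G)

lemma MK.mono {K K' : Ideal (MvPolynomial U 𝕜)} (h : K ≤ K') {f : Finset U → MvPolynomial U 𝕜}
    (hf : MK K f) : MK K' f := fun G => h (hf G)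

lemma KD_WU' (a : U → 𝕜) (f : Finset U → MvPolynomial U 𝕜) :
    KD 𝕜 (WU a f) = (fun G => (∑ v, a v • X v) * f G) - WU a (KD 𝕜 f) := by
  funext G
  rw [Pi.sub_apply, ← KD_WU, add_sub_cancel_right]

lemma KD_mul' (u : MvPolynomial U 𝕜) (f : Finset U → MvPolynomial U 𝕜) :
    KD 𝕜 (fun G => u * f G) = fun G => u * KD 𝕜 f G := funext fun G => KD_mul u f G

lemma PK_step {r : ℕ} {K : Ideal (MvPolynomial U 𝕜)} (hK : IsHomogIdeal 𝕜 K)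
    {u : MvPolynomial U 𝕜} (hu : u.IsHomogeneous 1) (hP : PK r (K ⊔ Ideal.span {u}))
    (hI : ∀ n, INJ K u n) : PK r K := by
  intro e he f hf hfK
  obtain ⟨η, hη, hη2⟩ := hP e he f hf (hfK.mono le_sup_left)
  obtain ⟨ξ, hξ, hξ2⟩ := choose_split hK hu (hf.sub' hη.KD) hη2
  obtain ⟨a, rfl⟩ := linear_form hu
  have h1 : MK K (KD 𝕜 ξ) := by
    intro G
    refine hI (e + 1) _ (hξ.KD G) ?_
    have h2 := hξ2.KD
    rw [map_sub, map_sub, KD_KD, sub_zero, KD_mul'] at h2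
    have h3 := (hfK.sub h2) G
    simpa using h3
  refine ⟨η + WU a ξ, hη.add' (hξ.WU a), ?_⟩
  have : f - KD 𝕜 (η + WU a ξ) =
      (f - KD 𝕜 η - fun G => (∑ v, a v • X v) * ξ G) + WU a (KD 𝕜 ξ) := by
    rw [map_add, KD_WU']; abel
  rw [this]
  exact hξ2.add (h1.WU a)

lemma INJ_step {r : ℕ} {K : Ideal (MvPolynomial U 𝕜)} (hK : HGen r K) (hr : 1 ≤ r)
    {u : MvPolynomial U 𝕜} (hu : u.IsHomogeneous 1) (hP : PK r (K ⊔ Ideal.span {u})) {q : ℕ}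
    (hq : r ≤ q) (hI : INJ K u q) : INJ K u (q + 1) := by
  intro m hm hum
  obtain ⟨p, rfl⟩ : ∃ p, q = p + 1 := ⟨q - 1, by omega⟩
  obtain ⟨a, ha⟩ := linear_form hu
  set μ := mkS (fun v => (((p + 1 : ℕ) + 1 : 𝕜)⁻¹) • pderiv v m) with hμ
  have hμe : HC μ (p + 1) := mkS_HC fun v => IsHomogeneous_smul (pderiv_hom hm v) _
  have hμs : Sing μ := mkS_sing _
  have hμm : KD 𝕜 μ ∅ = m := by
    rw [KD_empty]
    conv_rhs => rw [euler_inv hm]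
    simp [hμ, mkS_apply]
  -- the 1-chain u ∧ m
  have hs : Sing (WU a (KD 𝕜 μ)) := by
    intro G hG
    rw [WU_apply]
    refine Finset.sum_eq_zero fun v hv => ?_
    rw [hμs.KD_ne, smul_zero, smul_zero]
    intro h
    have h2 := Finset.card_erase_of_mem hv
    rw [h, Finset.card_empty] at h2
    have := Finset.card_pos.mpr ⟨v, hv⟩
    omega
  have hwk : KD 𝕜 (WU a (KD 𝕜 μ)) ∅ ∈ K := by
    rw [KD_WU', KD_KD, map_zero, sub_zero, hμm, ← ha]
    exact hum
  obtain ⟨τ, hτ, hτK⟩ := H1 hK (by omega) (hμe.KD.WU a) hs hwk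
  -- apply P(K')
  have hKD : KD 𝕜 (WU a μ + τ) = (fun G => u * μ G) - (WU a (KD 𝕜 μ) - KD 𝕜 τ) := by
    rw [map_add, KD_WU', ← ha]; abel
  obtain ⟨ρ, hρ, hρK⟩ := hP p (by omega) (WU a μ + τ) ((hμe.WU a).add' hτ) (by
    rw [hKD]
    refine MK.sub (fun G => ?_) (hτK.mono le_sup_left)
    exact Ideal.mul_mem_right _ _ (Ideal.mem_sup_right (Ideal.mem_span_singleton_self u)))
  obtain ⟨σ, hσ, hσK⟩ := choose_split hK.homog hu (((hμe.WU a).add' hτ).sub' hρ.KD) hρK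
  have h4 := hσK.KD
  rw [map_sub, map_sub, KD_KD, sub_zero, hKD, KD_mul'] at h4
  have h5 := h4.add hτK
  have h6 : MK K (μ - KD 𝕜 σ) := by
    intro G
    refine hI _ ((hμe.sub' hσ.KD) G) ?_
    have := h5 G
    simp only [Pi.add_apply, Pi.sub_apply] at this ⊢
    convert this using 1
    ring
  have h7 := h6.KD ∅
  rw [map_sub, KD_KD, sub_zero, hμm] at h7
  exact h7

theorem PK_main {r : ℕ} (hr : 1 ≤ r) (N : ℕ) (K : ℕ → Ideal (MvPolynomial U 𝕜))
    (u : ℕ → MvPolynomial U 𝕜) (hu : ∀ s < N, (u s).IsHomogeneous 1) (h0 : HGen r (K 0))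
    (hK : ∀ s < N, K (s + 1) = K s ⊔ Ideal.span {u s})
    (hI : ∀ s < N, ∀ n ≤ r, INJ (K s) (u s) n)
    (hN : ∀ e, r ≤ e → ∀ f : MvPolynomial U 𝕜, f.IsHomogeneous e → f ∈ K N) : PK r (K 0) := by
  have hG : ∀ s ≤ N, HGen r (K s) := by
    intro s
    induction s with
    | zero => intro _; exact h0
    | succ s ih =>
      intro hs
      rw [hK s (by omega)]
      exact (ih (by omega)).sup hr (hu s (by omega))
  have hP : ∀ j ≤ N, PK r (K (N - j)) := by
    intro j
    induction j with
    | zero =>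
      intro _ e he f hf _
      exact ⟨0, fun G => isHomogeneous_zero _ _ _, fun G => by
        rw [map_zero, sub_zero]; exact hN _ he _ (hf G)⟩
    | succ j ih =>
      intro hj
      have h1 := ih (by omega)
      set s := N - (j + 1) with hs
      rw [show N - j = s + 1 by omega, hK s (by omega)] at h1
      have hsN : s < N := by omega
      refine PK_step (hG s hsN.le).homog (hu s hsN) h1 ?_
      intro n
      rcases le_or_gt n r with hn | hn
      · exact hI s hsN n hn
      · induction n with
        | zero => omega
        | succ n ihn =>
          refine INJ_step (hG s hsN.le) hr (hu s hsN) h1 (by omega) ?_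
          rcases le_or_gt n r with hn' | hn'
          · exact hI s hsN n hn'
          · exact ihn hn'
  have := hP N le_rfl
  rwa [Nat.sub_self] at this

end Alg2

open Finset
set_option linter.unusedSectionVars false

section Alg3
open MvPolynomial
variable {𝕜 : Type*} [Field 𝕜] {U : Type*} [Fintype U] [LinearOrder U]

/-- exponent vector of a squarefree monomial -/
noncomputable def ind (F : Finset U) : U →₀ ℕ :=
  Finsupp.equivFunOnFinite.symm (fun v => if v ∈ F then 1 else 0)

lemma ind_apply (F : Finset U) (v : U) : ind F v = if v ∈ F then 1 else 0 := rfl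

lemma ind_support (F : Finset U) : (ind F).support = F := by
  ext v; simp [ind_apply]

lemma ind_le (F : Finset U) (m : U →₀ ℕ) : ind F ≤ m ↔ F ⊆ m.support := by
  constructor
  · intro h v hv
    have := h v
    rw [ind_apply, if_pos hv] at this
    simp; omega
  · intro h v
    rw [ind_apply]
    split_ifs with hv
    · have := h hv
      simp at this; omega
    · omega

lemma prod_X (F : Finset U) : ∏ v ∈ F, (X v : MvPolynomial U 𝕜) = monomial (ind F) 1 := by
  rw [monomial_eq, C_1, one_mul, Finsupp.prod, ind_support]
  refine Finset.prod_congr rfl fun v hv => ?_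
  rw [ind_apply, if_pos hv, pow_one]

lemma ind_degree (F : Finset U) : (ind F).degree = F.card := by
  have h : (ind F).degree = ∑ i ∈ (ind F).support, ind F i := rfl
  rw [h, ind_support, Finset.card_eq_sum_ones]
  refine Finset.sum_congr rfl fun v hv => ?_
  rw [ind_apply, if_pos hv]

lemma ind_erase {F : Finset U} {v : U} (hv : v ∈ F) : ind F - Finsupp.single v 1 = ind (F.erase v) := by
  ext u
  rw [Finsupp.tsub_apply, ind_apply, ind_apply, Finsupp.single_apply]
  by_cases h : u = v
  · subst h; simp [hv]
  · simp [h, Ne.symm h]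

lemma SR_mem {Γ : Set (Finset U)} (hΓ : IsComplex Γ) {f : MvPolynomial U 𝕜} :
    f ∈ SRideal 𝕜 Γ ↔ ∀ m, coeff m f ≠ 0 → m.support ∉ Γ := by
  have h1 : {m : MvPolynomial U 𝕜 | ∃ F : Finset U, F ∉ Γ ∧ m = ∏ v ∈ F, MvPolynomial.X v} =
      (fun s => monomial s (1 : 𝕜)) '' (ind '' Γᶜ) := by
    ext p
    simp only [Set.mem_ofPred_eq, Set.mem_image, Set.mem_compl_iff, exists_exists_and_eq_and,
      prod_X]
    constructor
    · rintro ⟨F, hF, rfl⟩; exact ⟨F, hF, rfl⟩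
    · rintro ⟨F, hF, rfl⟩; exact ⟨F, hF, rfl⟩
  rw [SRideal, h1, mem_ideal_span_monomial_image]
  constructor
  · intro h m hm hmΓ
    obtain ⟨_, ⟨F, hF, rfl⟩, hle⟩ := h m (by simpa using hm)
    exact hF (hΓ _ hmΓ _ ((ind_le _ _).mp hle))
  · intro h m hm
    exact ⟨_, ⟨m.support, h m (by simpa using hm), rfl⟩, (ind_le _ _).mpr le_rfl⟩

lemma SR_coeff {Γ : Set (Finset U)} (hΓ : IsComplex Γ) {f : MvPolynomial U 𝕜}
    (hf : f ∈ SRideal 𝕜 Γ) {F : Finset U} (hF : F ∈ Γ) : coeff (ind F) f = 0 := by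
  by_contra h
  have := (SR_mem hΓ).mp hf _ h
  rw [ind_support] at this
  exact this hF

/-- coboundary -/
def cob (φ : Finset U → 𝕜) (H : Finset U) : 𝕜 := ∑ v ∈ H, sg 𝕜 v (H.erase v) * φ (H.erase v)

lemma adjoint (ζ ψ : Finset U → 𝕜) :
    ∑ F, ζ F * cob ψ F = ∑ G, bdryMap 𝕜 ζ G * ψ G := by
  have hb : ∀ G, bdryMap 𝕜 ζ G = ∑ v ∈ Gᶜ, sg 𝕜 v G * ζ (insert v G) := fun G => rfl
  simp only [cob, hb, Finset.mul_sum, Finset.sum_mul]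
  rw [Finset.sum_sigma', Finset.sum_sigma']
  refine Finset.sum_bij' (fun x _ => ⟨x.1.erase x.2, x.2⟩) (fun x _ => ⟨insert x.2 x.1, x.2⟩)
    ?_ ?_ ?_ ?_ ?_
  · rintro ⟨F, v⟩ h; simp
  · rintro ⟨F, v⟩ h; simp
  · rintro ⟨F, v⟩ h
    simp at h
    simp [Finset.insert_erase h]
  · rintro ⟨F, v⟩ h
    simp at h
    simp [Finset.erase_insert h]
  · rintro ⟨F, v⟩ h
    simp at h
    simp only [Finset.insert_erase h]
    ring

/-- sign of the position of `v` in `W` is `sg 𝕜 v W`; the twisting sign of `F` -/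
def tw (𝕜 : Type*) [Field 𝕜] {U : Type*} [LinearOrder U] (W F : Finset U) : 𝕜 :=
  ∏ v ∈ F, sg 𝕜 v W

lemma tw_erase (W F : Finset U) {v : U} (hv : v ∈ F) :
    tw 𝕜 W (F.erase v) = sg 𝕜 v W * tw 𝕜 W F := by
  unfold tw
  rw [← Finset.mul_prod_erase F _ hv, ← mul_assoc, sg_mul_self, one_mul]

lemma tw_ne (W F : Finset U) : tw 𝕜 W F ≠ 0 := by
  unfold tw
  refine Finset.prod_ne_zero_iff.mpr fun v _ h => ?_
  have := sg_mul_self (𝕜 := 𝕜) v W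
  rw [h] at this; simp at this

lemma sg_sdiff (W H : Finset U) (hH : H ⊆ W) {v : U} :
    sg 𝕜 v (W \ H) = sg 𝕜 v W * sg 𝕜 v (H.erase v) := by
  have h1 : sg 𝕜 v W = sg 𝕜 v (W \ H) * sg 𝕜 v (H.erase v) := by
    unfold sg
    rw [← pow_add]
    congr 1
    rw [← Finset.card_union_of_disjoint]
    · congr 1
      ext u
      simp only [Finset.mem_filter, Finset.mem_union, Finset.mem_sdiff, Finset.mem_erase]
      constructor
      · rintro ⟨h1, h2⟩
        by_cases hu : u ∈ H
        · exact Or.inr ⟨⟨h2.ne, hu⟩, h2⟩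
        · exact Or.inl ⟨⟨h1, hu⟩, h2⟩
      · rintro (⟨⟨h1, h2⟩, h3⟩ | ⟨⟨h1, h2⟩, h3⟩)
        · exact ⟨h1, h3⟩
        · exact ⟨hH h2, h3⟩
    · rw [Finset.disjoint_left]
      intro u h1 h2
      simp only [Finset.mem_filter, Finset.mem_sdiff, Finset.mem_erase] at h1 h2
      exact h1.1.2 h2.1.2
  rw [h1, mul_assoc, sg_mul_self, mul_one]

/-- Koszul cochain to chain -/
noncomputable def fφ (Γ : Set (Finset U)) [DecidablePred (· ∈ Γ)] (W : Finset U) (c : ℕ)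
    (φ : Finset U → 𝕜) : Finset U → MvPolynomial U 𝕜 :=
  fun G => if G ⊆ W ∧ W \ G ∈ Γ ∧ (W \ G).card = c then
    monomial (ind (W \ G)) (tw 𝕜 W (W \ G) * φ (W \ G)) else 0

lemma coc_of_exact [CharZero 𝕜] {Γ : Set (Finset U)} (hΓ : IsComplex Γ) {r : ℕ}
    (hP : PK r (SRideal 𝕜 Γ)) (W : Finset U) {e : ℕ} (he : r ≤ e + 1) (φ : Finset U → 𝕜)
    (hφ : ∀ H ∈ Γ, H ⊆ W → H.card = e + 2 → cob φ H = 0) :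
    ∃ ψ : Finset U → 𝕜, ∀ F ∈ Γ, F ⊆ W → F.card = e + 1 → φ F = cob ψ F := by
  classical
  obtain ⟨g, hg, hgK⟩ := hP e he (fφ Γ W (e + 1) φ) (by
    intro G
    unfold fφ
    split_ifs with h
    · exact isHomogeneous_monomial _ (by rw [ind_degree, h.2.2])
    · exact isHomogeneous_zero _ _ _) (by
    intro G
    rw [KD_apply]
    by_cases hGW : G ⊆ W
    · set H := W \ G with hH
      have hG : G = W \ H := by rw [hH, Finset.sdiff_sdiff_eq_self hGW]
      have hHW : H ⊆ W := Finset.sdiff_subset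
      have hins : ∀ v, W \ insert v G = H.erase v := by
        intro v; ext x; simp [hH]; tauto
      have hterm : ∀ v ∈ Gᶜ, v ∈ H → (sg 𝕜 v G • (X v * fφ Γ W (e + 1) φ (insert v G))) =
          if H.erase v ∈ Γ ∧ (H.erase v).card = e + 1 then
            monomial (ind H) (tw 𝕜 W H * (sg 𝕜 v (H.erase v) * φ (H.erase v))) else 0 := by
        intro v _ hvH
        have hvW := hHW hvH
        unfold fφ
        rw [hins]
        by_cases hc : H.erase v ∈ Γ ∧ (H.erase v).card = e + 1
        · rw [if_pos ⟨Finset.insert_subset hvW hGW, hc⟩, if_pos hc, X, monomial_mul,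
            smul_monomial, one_mul, ← ind_erase hvH, tw_erase _ _ hvH]
          congr 1
          · congr 1
            rw [add_comm]
            refine tsub_add_cancel_of_le ?_
            intro u
            rw [Finsupp.single_apply, ind_apply]
            split_ifs with h1 h2
            · exact le_rfl
            · exact absurd (h1 ▸ hvH) h2
            · omega
            · exact le_rfl
          · have e1 := sg_sdiff (𝕜 := 𝕜) W H hHW (v := v)
            rw [← hG] at e1
            rw [e1, smul_eq_mul]
            linear_combination (tw 𝕜 W H * sg 𝕜 v (H.erase v) * φ (H.erase v)) *
              sg_mul_self (𝕜 := 𝕜) v W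
        · rw [if_neg hc, if_neg (fun h => hc h.2), mul_zero, smul_zero]
      have hout : ∀ v ∈ Gᶜ, v ∉ H → (sg 𝕜 v G • (X v * fφ Γ W (e + 1) φ (insert v G))) = 0 := by
        intro v hv hvH
        unfold fφ
        rw [if_neg, mul_zero, smul_zero]
        rintro ⟨h1, _⟩
        have : v ∈ W := h1 (by simp)
        simp [hH, this] at hvH hv
        exact hv hvH
      by_cases hHΓ : H ∈ Γ
      · by_cases hHc : H.card = e + 2
        · have : ∑ v ∈ Gᶜ, sg 𝕜 v G • (X v * fφ Γ W (e + 1) φ (insert v G)) =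
              monomial (ind H) (tw 𝕜 W H * cob φ H) := by
            rw [cob, Finset.mul_sum, map_sum]
            have hsub : H ⊆ Gᶜ := by
              intro x hx; simp [hH] at hx; simp [hx.2]
            rw [← Finset.sum_subset hsub (fun v hv hvH => hout v hv hvH)]
            refine Finset.sum_congr rfl fun v hv => ?_
            rw [hterm v (hsub hv) hv, if_pos]
            refine ⟨hΓ _ hHΓ _ (Finset.erase_subset _ _), ?_⟩
            rw [Finset.card_erase_of_mem hv, hHc]; omega
          rw [this, hφ H hHΓ hHW hHc, mul_zero, monomial_zero]
          exact zero_mem _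
        · rw [Finset.sum_eq_zero]
          · exact zero_mem _
          intro v hv
          by_cases hvH : v ∈ H
          · rw [hterm v hv hvH, if_neg]
            rintro ⟨_, h2⟩
            rw [Finset.card_erase_of_mem hvH] at h2
            have := Finset.card_pos.mpr ⟨v, hvH⟩
            omega
          · exact hout v hv hvH
      · refine sum_mem fun v hv => ?_
        by_cases hvH : v ∈ H
        · rw [hterm v hv hvH]
          split_ifs
          · rw [SR_mem hΓ]
            intro m hm
            rw [coeff_monomial] at hm
            split_ifs at hm with h
            · rw [← h, ind_support]; exact hHΓ
            · exact absurd rfl hm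
          · exact zero_mem _
        · rw [hout v hv hvH]; exact zero_mem _
    · rw [Finset.sum_eq_zero]
      · exact zero_mem _
      intro v _
      unfold fφ
      rw [if_neg, mul_zero, smul_zero]
      rintro ⟨h1, _⟩
      exact hGW ((Finset.subset_insert _ _).trans h1))
  refine ⟨fun F => tw 𝕜 W F * coeff (ind F) (g (W \ F)), ?_⟩
  intro F hF hFW hFc
  have h1 := SR_coeff hΓ (hgK (W \ F)) hF
  rw [Pi.sub_apply, coeff_sub, sub_eq_zero] at h1
  have hWF : W \ (W \ F) = F := Finset.sdiff_sdiff_eq_self hFW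
  have h2 : coeff (ind F) (fφ Γ W (e + 1) φ (W \ F)) = tw 𝕜 W F * φ F := by
    unfold fφ
    rw [hWF, if_pos ⟨Finset.sdiff_subset, hF, hFc⟩, coeff_monomial, if_pos rfl]
  rw [h2, KD_apply, coeff_sum] at h1
  have hsub : F ⊆ (W \ F)ᶜ := by
    intro x hx; simp [hx]
  rw [← Finset.sum_subset hsub] at h1
  · apply mul_left_cancel₀ (tw_ne (𝕜 := 𝕜) W F)
    rw [h1, cob, Finset.mul_sum]
    refine Finset.sum_congr rfl fun v hv => ?_
    have hvW := hFW hv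
    have e2 : insert v (W \ F) = W \ F.erase v := by
      ext x; simp
      by_cases hx : x = v
      · subst hx; simp [hvW]
      · simp [hx]
    rw [coeff_smul, coeff_X_mul', if_pos (by rw [ind_support]; exact hv), ind_erase hv, e2,
      sg_sdiff W F hFW, tw_erase W F hv, smul_eq_mul]
    have e3 : tw 𝕜 W F * tw 𝕜 W F = 1 := by
      unfold tw
      rw [← Finset.prod_mul_distrib]
      exact Finset.prod_eq_one fun v _ => sg_mul_self v W
    linear_combination (- sg 𝕜 v W * sg 𝕜 v (F.erase v) * coeff (ind (F.erase v)) (g (W \ F.erase v))) * e3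
  · intro v _ hv
    rw [coeff_smul, coeff_X_mul', if_neg (by rw [ind_support]; exact hv), smul_zero]

theorem Ex_of_PK [CharZero 𝕜] {Γ : Set (Finset U)} (hΓ : IsComplex Γ) {r : ℕ} (hr : 1 ≤ r)
    (hP : PK r (SRideal 𝕜 Γ)) (T : Finset U) (c : ℕ) (hc : r ≤ c) : Ex 𝕜 (del Γ T) c := by
  obtain ⟨e, rfl⟩ : ∃ e, c = e + 1 := ⟨c - 1, by omega⟩
  intro ζ hζ hζ0
  by_contra hcon
  have hnot : ζ ∉ redBdries 𝕜 (del Γ T) (e + 1) := by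
    rintro ⟨y, hy, h⟩
    exact hcon ⟨y, hy, h⟩
  obtain ⟨ℓ, h1, h2⟩ := Submodule.exists_le_ker_of_notMem hnot
  set φ : Finset U → 𝕜 := fun F => ℓ (Pi.single F 1) with hφ
  have hℓ : ∀ x : Finset U → 𝕜, ℓ x = ∑ F, x F * φ F := by
    intro x
    conv_lhs => rw [pi_eq_sum_univ' x]
    simp [hφ]
  have hdel : ∀ {F}, F ∈ del Γ T ↔ F ∈ Γ ∧ F ⊆ Tᶜ := by
    intro F
    simp only [del, Set.mem_ofPred_eq, Finset.subset_compl_iff_disjoint_right, disjoint_comm]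
  obtain ⟨ψ, hψ⟩ := coc_of_exact hΓ hP Tᶜ hc φ (by
    intro H hH hHW hHc
    have h3 : bdryMap 𝕜 (Pi.single H 1) ∈ LinearMap.ker ℓ := by
      apply h2
      refine ⟨Pi.single H 1, ?_, rfl⟩
      intro G hG
      by_cases h : G = H
      · subst h; exact ⟨hdel.mpr ⟨hH, hHW⟩, hHc⟩
      · simp [Pi.single_apply, h] at hG
    rw [LinearMap.mem_ker, hℓ, ← adjoint] at h3
    simpa [Pi.single_apply] using h3)
  apply h1
  rw [hℓ]
  have : ∑ F, ζ F * φ F = ∑ F, ζ F * cob ψ F := by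
    refine Finset.sum_congr rfl fun F _ => ?_
    by_cases hF : ζ F = 0
    · simp [hF]
    · obtain ⟨h3, h4⟩ := hζ F hF
      have := hdel.mp h3
      rw [hψ F this.1 this.2 h4]
  rw [this, adjoint, hζ0]
  simp

end Alg3

open Finset
set_option linter.unusedSectionVars false

section Alg4
open MvPolynomial
variable {𝕜 : Type*} [Field 𝕜] {U : Type*} [Fintype U] [LinearOrder U]

/-- successive quotients by linear forms -/
noncomputable def CH (K : Ideal (MvPolynomial U 𝕜)) (u : ℕ → MvPolynomial U 𝕜) :
    ℕ → Ideal (MvPolynomial U 𝕜)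
  | 0 => K
  | s + 1 => CH K u s ⊔ Ideal.span {u s}

lemma homog_sup {K : Ideal (MvPolynomial U 𝕜)} (hK : IsHomogIdeal 𝕜 K) {u : MvPolynomial U 𝕜}
    (hu : u.IsHomogeneous 1) : IsHomogIdeal 𝕜 (K ⊔ Ideal.span {u}) := by
  intro x hx i
  rw [Submodule.mem_sup] at hx
  obtain ⟨k, hk, y, hy, rfl⟩ := hx
  rw [Ideal.mem_span_singleton'] at hy
  obtain ⟨c, rfl⟩ := hy
  rw [map_add]
  refine add_mem (Ideal.mem_sup_left (hK _ hk _)) ?_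
  cases i with
  | zero => rw [hc_mul_lt hu (by omega)]; exact zero_mem _
  | succ n =>
    rw [hc_mul hu]
    exact Ideal.mem_sup_right (Ideal.mul_mem_left _ _ (Ideal.mem_span_singleton_self u))

lemma CH_homog {K : Ideal (MvPolynomial U 𝕜)} (hK : IsHomogIdeal 𝕜 K) {u : ℕ → MvPolynomial U 𝕜}
    (hu : ∀ s, (u s).IsHomogeneous 1) (s : ℕ) : IsHomogIdeal 𝕜 (CH K u s) := by
  induction s with
  | zero => exact hK
  | succ s ih => exact homog_sup ih (hu s)

lemma CH_mono {I J : Ideal (MvPolynomial U 𝕜)} (h : J ≤ I) (u : ℕ → MvPolynomial U 𝕜) (s : ℕ) :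
    CH J u s ≤ CH I u s := by
  induction s with
  | zero => exact h
  | succ s ih => exact sup_le_sup_right ih _

lemma CH_le (I : Ideal (MvPolynomial U 𝕜)) (u : ℕ → MvPolynomial U 𝕜) (s : ℕ) :
    I ≤ CH I u s := by
  induction s with
  | zero => exact le_rfl
  | succ s ih => exact ih.trans le_sup_left

lemma mul_hom {u f : MvPolynomial U 𝕜} {n : ℕ} (hu : u.IsHomogeneous 1) (hf : f.IsHomogeneous n) :
    (u * f).IsHomogeneous (n + 1) := by
  rw [add_comm]; exact hu.mul hf

lemma CH_agree {I J : Ideal (MvPolynomial U 𝕜)} (hI : IsHomogIdeal 𝕜 I)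
    {u : ℕ → MvPolynomial U 𝕜} (hu : ∀ s, (u s).IsHomogeneous 1) {m : ℕ}
    (h : ∀ n ≤ m, ∀ f : MvPolynomial U 𝕜, f.IsHomogeneous n → f ∈ I → f ∈ J) (s : ℕ) :
    ∀ n ≤ m, ∀ f : MvPolynomial U 𝕜, f.IsHomogeneous n → f ∈ CH I u s → f ∈ CH J u s := by
  induction s with
  | zero => exact h
  | succ s ih =>
    intro n hn f hf hfI
    cases n with
    | zero => exact Ideal.mem_sup_left (ih 0 hn f hf (split_u0 (CH_homog hI hu s) (hu s) hfI hf))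
    | succ e =>
      obtain ⟨ξ, hξ, hx⟩ := split_u (CH_homog hI hu s) (hu s) hfI hf
      have := ih (e + 1) hn _ (hf.sub (mul_hom (hu s) hξ)) hx
      have h2 : u s * ξ ∈ CH J u (s + 1) :=
        Ideal.mem_sup_right (Ideal.mul_mem_right _ _ (Ideal.mem_span_singleton_self _))
      have h3 := add_mem (show _ ∈ CH J u (s + 1) from Ideal.mem_sup_left this) h2
      rwa [sub_add_cancel] at h3

lemma CH_inter {I J : Ideal (MvPolynomial U 𝕜)} (hI : IsHomogIdeal 𝕜 I) (hJ : IsHomogIdeal 𝕜 J)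
    (hJI : J ≤ I)
    {u : ℕ → MvPolynomial U 𝕜} (hu : ∀ s, (u s).IsHomogeneous 1) {m : ℕ}
    (h : ∀ n < m, ∀ f : MvPolynomial U 𝕜, f.IsHomogeneous n → f ∈ I → f ∈ J) {d : ℕ}
    (hreg : ∀ s < d, ∀ g, u s * g ∈ CH I u s → g ∈ CH I u s)
    {f : MvPolynomial U 𝕜} (hf : f.IsHomogeneous m) (hfI : f ∈ I) (s : ℕ) :
    s ≤ d → f ∈ CH J u s → f ∈ J := by
  induction s with
  | zero => exact fun _ h => h
  | succ s ih =>
    intro hs hfJ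
    refine ih (by omega) ?_
    cases m with
    | zero => exact split_u0 (CH_homog hJ hu s) (hu s) hfJ hf
    | succ e =>
      obtain ⟨ξ, hξ, hx⟩ := split_u (CH_homog hJ hu s) (hu s) hfJ hf
      have h1 : u s * ξ ∈ CH I u s := by
        have := sub_mem (CH_le I u s hfI) (CH_mono hJI u s hx)
        rwa [sub_sub_cancel] at this
      have h2 := CH_agree hI hu (fun n hn => h n (Nat.lt_succ_of_le hn)) s e le_rfl ξ hξ
        (hreg s (by omega) ξ h1)
      have h3 := add_mem hx (Ideal.mul_mem_left _ (u s) h2)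
      rwa [sub_add_cancel] at h3

lemma up_mem [CharZero 𝕜] {K : Ideal (MvPolynomial U 𝕜)} {r : ℕ}
    (h : ∀ f : MvPolynomial U 𝕜, f.IsHomogeneous r → f ∈ K) :
    ∀ e, r ≤ e → ∀ f : MvPolynomial U 𝕜, f.IsHomogeneous e → f ∈ K := by
  intro e he
  induction e, he using Nat.le_induction with
  | base => exact h
  | succ e he ih =>
    intro f hf
    rw [euler_inv hf]
    exact sum_mem fun v _ => Ideal.mul_mem_left _ _
      (ih _ (IsHomogeneous_smul (pderiv_hom hf v) _))

theorem alg_main [CharZero 𝕜] {I J : Ideal (MvPolynomial U 𝕜)} {r d : ℕ} (hr : 1 ≤ r)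
    (hr2 : 2 * r ≤ d) (hJ : HGen r J) (hI : IsHomogIdeal 𝕜 I) (hJI : J ≤ I)
    (hag : ∀ n ≤ r, ∀ f : MvPolynomial U 𝕜, f.IsHomogeneous n → f ∈ I → f ∈ J)
    (u : ℕ → MvPolynomial U 𝕜) (hu : ∀ s, (u s).IsHomogeneous 1)
    (hreg : ∀ s < d, ∀ g, u s * g ∈ CH I u s → g ∈ CH I u s)
    (hinj : ∀ n ≤ d - r, INJ (CH I u d) (u d) n)
    (hsurj : ∀ f : MvPolynomial U 𝕜, f.IsHomogeneous r → f ∈ CH I u (d + 1)) :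
    PK r J ∧ ∀ n ≤ d - r + 1, ∀ f : MvPolynomial U 𝕜, f.IsHomogeneous n → f ∈ I → f ∈ J := by
  have hJh := hJ.homog
  have hN : ∀ e, r ≤ e → ∀ f : MvPolynomial U 𝕜, f.IsHomogeneous e → f ∈ CH J u (d + 1) :=
    up_mem fun f hf => CH_agree hI hu hag (d + 1) r le_rfl f hf (hsurj f hf)
  constructor
  · refine PK_main hr (d + 1) (CH J u) u (fun s _ => hu s) hJ (fun s _ => rfl) ?_ hN
    intro s hs n hn m hm hum
    refine CH_agree hI hu hag s n hn m hm ?_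
    have h1 := CH_mono hJI u s hum
    rcases Nat.lt_succ_iff_lt_or_eq.mp hs with h | rfl
    · exact hreg s h m h1
    · exact hinj n (by omega) m hm h1
  · intro n
    induction n using Nat.strong_induction_on with
    | _ n ih =>
      intro hn f hf hfI
      rcases le_or_gt n r with h | h
      · exact hag n h f hf hfI
      have hlt : ∀ n' < n, ∀ f : MvPolynomial U 𝕜, f.IsHomogeneous n' → f ∈ I → f ∈ J :=
        fun n' hn' => ih n' hn' (by omega)
      refine CH_inter hI hJh hJI hu hlt hreg hf hfI d le_rfl ?_
      obtain ⟨e, rfl⟩ : ∃ e, n = e + 1 := ⟨n - 1, by omega⟩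
      obtain ⟨ξ, hξ, hx⟩ := split_u (CH_homog hJh hu d) (hu d) (hN (e + 1) (by omega) f hf) hf
      have h1 : u d * ξ ∈ CH I u d := by
        have := sub_mem (CH_le I u d hfI) (CH_mono hJI u d hx)
        rwa [sub_sub_cancel] at this
      have h2 := CH_agree hI hu (fun n' hn' => hlt n' (Nat.lt_succ_of_le hn')) d e le_rfl ξ hξ
        (hinj e (by omega) ξ hξ h1)
      have h3 := add_mem hx (Ideal.mul_mem_left _ (u d) h2)
      rwa [sub_add_cancel] at h3

end Alg4

open Finset
set_option linter.unusedSectionVars false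

section Alg5
open MvPolynomial
variable {𝕜 : Type*} [Field 𝕜] {U : Type*} [Fintype U] [LinearOrder U]

lemma skc_complex (Δ : Set (Finset U)) (i : ℕ) : IsComplex (skc Δ i) :=
  fun _ hF _ hG H hH hc => hF H (hH.trans hG) hc

lemma sub_skc {Δ : Set (Finset U)} (hΔ : IsComplex Δ) (i : ℕ) : Δ ⊆ skc Δ i :=
  fun F hF G hG _ => hΔ F hF G hG

lemma SR_homog {Γ : Set (Finset U)} (hΓ : IsComplex Γ) : IsHomogIdeal 𝕜 (SRideal 𝕜 Γ) := by
  intro f hf i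
  rw [SR_mem hΓ] at hf ⊢
  intro m hm
  rw [coeff_homogeneousComponent] at hm
  split_ifs at hm with h
  · exact hf m hm
  · exact absurd rfl hm

lemma SR_mono {Γ Δ : Set (Finset U)} (h : Δ ⊆ Γ) : SRideal 𝕜 Γ ≤ SRideal 𝕜 Δ := by
  refine Ideal.span_mono ?_
  rintro m ⟨F, hF, rfl⟩
  exact ⟨F, fun hh => hF (h hh), rfl⟩

lemma card_support_le (m : U →₀ ℕ) : m.support.card ≤ m.degree := by
  rw [← ind_degree]
  exact Finsupp.degree_mono ((ind_le _ _).mpr le_rfl)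

lemma SR_agree {Δ : Set (Finset U)} (hΔ : IsComplex Δ) {r : ℕ} (hr : 1 ≤ r) :
    ∀ n ≤ r, ∀ f : MvPolynomial U 𝕜, f.IsHomogeneous n → f ∈ SRideal 𝕜 Δ →
      f ∈ SRideal 𝕜 (skc Δ (r - 1)) := by
  intro n hn f hf hfI
  rw [SR_mem hΔ] at hfI
  rw [SR_mem (skc_complex _ _)]
  intro m hm hmΓ
  refine hfI m hm (hmΓ _ le_rfl ?_)
  have h1 : m.degree = n := by
    have := hf hm
    exact (DFunLike.congr_fun (Finsupp.degree_eq_weight_one (R := ℕ)) m).trans this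
  have := card_support_le m
  omega

lemma skc_HGen (Δ : Set (Finset U)) {r : ℕ} (hr : 1 ≤ r) :
    HGen r (SRideal 𝕜 (skc Δ (r - 1))) := by
  refine ⟨{m | ∃ F : Finset U, F.card ≤ r ∧ F ∉ Δ ∧ m = ∏ v ∈ F, X v}, ?_, ?_⟩
  · apply le_antisymm
    · refine Ideal.span_le.mpr ?_
      rintro m ⟨F, hF, rfl⟩
      simp only [skc, Set.mem_ofPred_eq, not_forall] at hF
      obtain ⟨G, hGF, hG, hGΔ⟩ := hF
      rw [← Finset.prod_sdiff hGF]
      exact Ideal.mul_mem_left _ _ (Ideal.subset_span ⟨G, by omega, hGΔ, rfl⟩)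
    · refine Ideal.span_mono ?_
      rintro m ⟨F, hc, hF, rfl⟩
      exact ⟨F, fun h => hF (h F le_rfl (by omega)), rfl⟩
  · rintro s ⟨F, hc, _, rfl⟩
    refine ⟨F.card, hc, ?_⟩
    rw [prod_X]
    exact isHomogeneous_monomial _ (ind_degree F)

theorem alg_skc [CharZero 𝕜] {Δ : Set (Finset U)} (hΔ : IsComplex Δ) {r d : ℕ} (hr : 1 ≤ r)
    (hr2 : 2 * r ≤ d) (u : ℕ → MvPolynomial U 𝕜) (hu : ∀ s, (u s).IsHomogeneous 1)
    (hreg : ∀ s < d, ∀ g, u s * g ∈ CH (SRideal 𝕜 Δ) u s → g ∈ CH (SRideal 𝕜 Δ) u s)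
    (hinj : ∀ n ≤ d - r, INJ (CH (SRideal 𝕜 Δ) u d) (u d) n)
    (hsurj : ∀ f : MvPolynomial U 𝕜, f.IsHomogeneous r → f ∈ CH (SRideal 𝕜 Δ) u (d + 1)) :
    (∀ (T : Finset U) (c : ℕ), r ≤ c → Ex 𝕜 (del (skc Δ (r - 1)) T) c) ∧
      ∀ F ∈ skc Δ (r - 1), F.card ≤ d - r + 1 → F ∈ Δ := by
  obtain ⟨h1, h2⟩ := alg_main hr hr2 (skc_HGen Δ hr) (SR_homog hΔ) (SR_mono (sub_skc hΔ _))
    (SR_agree hΔ hr) u hu hreg hinj hsurj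
  refine ⟨fun T c hc => Ex_of_PK (skc_complex _ _) hr h1 T c hc, fun F hF hFc => ?_⟩
  by_contra hcon
  have h3 := h2 F.card hFc (∏ v ∈ F, X v)
    (by rw [prod_X]; exact isHomogeneous_monomial _ (ind_degree F))
    (Ideal.subset_span ⟨F, hcon, rfl⟩)
  have h4 := SR_coeff (skc_complex _ _) h3 hF
  rw [prod_X, coeff_monomial, if_pos rfl] at h4
  exact one_ne_zero h4

end Alg5

open Finset
set_option linter.unusedSectionVars false

section Dim1

lemma finrank_map_inj {𝕜 M N : Type*} [Field 𝕜] [AddCommGroup M] [Module 𝕜 M] [AddCommGroup N]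
    [Module 𝕜 N] {f : M →ₗ[𝕜] N} (hf : Function.Injective f) (p : Submodule 𝕜 M) :
    Module.finrank 𝕜 (p.map f) = Module.finrank 𝕜 p :=
  (Submodule.equivMapOfInjective f hf p).finrank_eq.symm

lemma dimsplit {𝕜 M N : Type*} [Field 𝕜] [AddCommGroup M] [Module 𝕜 M] [AddCommGroup N]
    [Module 𝕜 N] (f : M →ₗ[𝕜] N) (p : Submodule 𝕜 M) [FiniteDimensional 𝕜 p] :
    Module.finrank 𝕜 (p.map f) + Module.finrank 𝕜 (p ⊓ LinearMap.ker f : Submodule 𝕜 M) =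
      Module.finrank 𝕜 p := by
  have h := LinearMap.finrank_range_add_finrank_ker (f.domRestrict p)
  rw [LinearMap.range_domRestrict] at h
  rw [← h]
  congr 1
  have h2 : LinearMap.ker (f.domRestrict p) = Submodule.comap p.subtype (LinearMap.ker f) := by
    ext x; simp
  rw [h2]
  have h3 : (p ⊓ LinearMap.ker f : Submodule 𝕜 M) =
      Submodule.map p.subtype (Submodule.comap p.subtype (LinearMap.ker f)) := by
    rw [Submodule.map_comap_subtype]
  rw [h3]
  exact finrank_map_inj p.injective_subtype _

variable {𝕜 : Type*} [Field 𝕜] [CharZero 𝕜] {U : Type*} [Fintype U] [LinearOrder U]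

lemma finrank_chainsOn (A : Set (Finset U)) :
    Module.finrank 𝕜 (chainsOn 𝕜 A) = A.ncard := by
  classical
  have hinj : Function.Injective (Function.ExtendByZero.linearMap 𝕜 (Subtype.val : A → Finset U)) := by
    intro f g h
    funext x
    have := congrFun h x.1
    simpa [Function.ExtendByZero.linearMap_apply, Subtype.val_injective.extend_apply] using this
  have hr : LinearMap.range (Function.ExtendByZero.linearMap 𝕜 (Subtype.val : A → Finset U)) =
      chainsOn 𝕜 A := by
    ext f
    constructor
    · rintro ⟨g, rfl⟩ G hG
      by_contra hGA
      apply hG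
      rw [Function.ExtendByZero.linearMap_apply, Function.extend_apply']
      · rfl
      · rintro ⟨a, rfl⟩; exact hGA a.2
    · intro hf
      refine ⟨fun x => f x.1, ?_⟩
      funext G
      rw [Function.ExtendByZero.linearMap_apply]
      by_cases hG : G ∈ A
      · exact Subtype.val_injective.extend_apply _ _ (⟨G, hG⟩ : A)
      · rw [Function.extend_apply' _ _ _ (by rintro ⟨a, rfl⟩; exact hG a.2)]
        by_contra h
        exact hG (hf G (fun h' => h (by simp [h'])))
  rw [← hr, LinearMap.finrank_range_of_inj hinj, Module.finrank_fintype_fun_eq_card,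
    Set.ncard_eq_toFinset_card', Set.toFinset_card]

lemma bdries_le_cycles {A : Set (Finset U)} (hA : IsComplex A) (c : ℕ) :
    redBdries 𝕜 A c ≤ redCycles 𝕜 A c := by
  rintro _ ⟨y, hy, rfl⟩
  exact ⟨Ch_bdry hA hy, bdry_bdry y⟩

lemma dim_cycles {A : Set (Finset U)} (hA : IsComplex A) (c : ℕ) :
    Module.finrank 𝕜 (redCycles 𝕜 A c) =
      Module.finrank 𝕜 (redH 𝕜 A c) + Module.finrank 𝕜 (redBdries 𝕜 A c) := by
  rw [finrank_redH]
  rw [← Submodule.finrank_quotient_add_finrank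
    (Submodule.comap (redCycles 𝕜 A c).subtype (redBdries 𝕜 A c))]
  congr 1
  rw [← finrank_map_inj (redCycles 𝕜 A c).injective_subtype,
    Submodule.map_comap_subtype, inf_eq_right.mpr (bdries_le_cycles hA c)]

lemma dim_chains_succ {A : Set (Finset U)} (c : ℕ) :
    numFacesCard A (c + 1) = Module.finrank 𝕜 (redBdries 𝕜 A c) +
      Module.finrank 𝕜 (redCycles 𝕜 A (c + 1)) := by
  rw [numFacesCard, ← finrank_chainsOn (𝕜 := 𝕜), ← dimsplit (bdryMap 𝕜)]
  rfl

lemma dim_chains_zero {A : Set (Finset U)} :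
    numFacesCard A 0 = Module.finrank 𝕜 (redCycles 𝕜 A 0) := by
  rw [numFacesCard, ← finrank_chainsOn (𝕜 := 𝕜)]
  have : redCycles 𝕜 A 0 = chainsOn 𝕜 {F | F ∈ A ∧ F.card = 0} := by
    refine inf_eq_left.mpr ?_
    intro f hf
    exact Ch_bdry_zero hf
  rw [this]

lemma euler_partial {A : Set (Finset U)} (hA : IsComplex A) (M : ℕ) :
    ∑ c ∈ range (M + 1), (-1 : ℤ) ^ c * numFacesCard A c =
      ∑ c ∈ range (M + 1), (-1 : ℤ) ^ c * Module.finrank 𝕜 (redH 𝕜 A c) +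
        (-1 : ℤ) ^ M * Module.finrank 𝕜 (redBdries 𝕜 A M) := by
  induction M with
  | zero =>
    simp only [zero_add, range_one, sum_singleton, pow_zero, one_mul]
    rw [dim_chains_zero (𝕜 := 𝕜), dim_cycles hA]; push_cast; ring
  | succ M ih =>
    rw [Finset.sum_range_succ, ih, Finset.sum_range_succ _ (M + 1),
      dim_chains_succ (𝕜 := 𝕜), dim_cycles hA]
    push_cast; ring

/-- faces as a finset -/
noncomputable def fc (A : Set (Finset U)) : Finset (Finset U) := A.toFinite.toFinset

lemma mem_fc {A : Set (Finset U)} {F : Finset U} : F ∈ fc A ↔ F ∈ A := Set.Finite.mem_toFinset _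

lemma numFaces_eq (A : Set (Finset U)) (c : ℕ) :
    numFacesCard A c = ((fc A).filter (fun F => F.card = c)).card := by
  rw [numFacesCard, ← Set.ncard_coe_finset]
  congr 1
  ext F; simp [mem_fc]

lemma sum_fc {R : Type*} [CommRing R] (A : Set (Finset U)) (g : ℕ → R) (M : ℕ)
    (hM : ∀ F ∈ A, F.card ≤ M) :
    ∑ F ∈ fc A, g F.card = ∑ c ∈ range (M + 1), g c * numFacesCard A c := by
  rw [← Finset.sum_fiberwise_of_maps_to (t := range (M + 1)) (g := Finset.card)]
  · refine Finset.sum_congr rfl fun c _ => ?_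
    rw [numFaces_eq, Finset.sum_congr rfl (g := fun _ => g c), Finset.sum_const, nsmul_eq_mul,
      mul_comm]
    intro F hF
    rw [(Finset.mem_filter.mp hF).2]
  · intro F hF
    have := hM F (mem_fc.mp hF)
    simp; omega

lemma euler_link {Δ : Set (Finset U)} {d : ℕ} (hd : 1 ≤ d)
    (h : IsHomologySphere 𝕜 Δ (d - 1)) {F : Finset U} (hF : F ∈ Δ) :
    ∑ G ∈ (fc Δ).filter (F ⊆ ·), (-1 : ℤ) ^ (d - G.card) = 1 := by
  obtain ⟨h1, h2, -, h4⟩ := h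
  rw [Nat.sub_add_cancel hd] at h2 h4
  have hL : IsComplex (link Δ F) := h1.link F
  have hFd := h2 F hF
  have hLc : ∀ G ∈ link Δ F, G.card + F.card ≤ d := by
    rintro G ⟨hG1, hG2⟩
    have := h2 _ hG2
    rw [Finset.card_union_of_disjoint hG1] at this
    omega
  have e1 := euler_partial (𝕜 := 𝕜) hL (d - F.card)
  have e0 : Module.finrank 𝕜 (redBdries 𝕜 (link Δ F) (d - F.card)) = 0 := by
    have := dim_chains_succ (𝕜 := 𝕜) (A := link Δ F) (d - F.card)
    have h0 : numFacesCard (link Δ F) (d - F.card + 1) = 0 := by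
      rw [numFaces_eq, Finset.card_eq_zero, Finset.filter_eq_empty_iff]
      intro G hG hc
      have := hLc G (mem_fc.mp hG)
      omega
    omega
  rw [e0, ← sum_fc (link Δ F) (fun c => (-1 : ℤ) ^ c) (d - F.card)
    (fun G hG => by have := hLc G hG; omega), Finset.sum_eq_single (d - F.card)] at e1
  · rw [h4 F hF, if_pos (by omega)] at e1
    have e2 : ∑ G ∈ (fc Δ).filter (F ⊆ ·), (-1 : ℤ) ^ (d - G.card) =
        ∑ G ∈ fc (link Δ F), (-1 : ℤ) ^ (d - F.card) * (-1 : ℤ) ^ G.card := by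
      refine Finset.sum_bij' (fun G _ => G \ F) (fun G _ => F ∪ G) ?_ ?_ ?_ ?_ ?_
      · intro G hG
        rw [Finset.mem_filter, mem_fc] at hG
        rw [mem_fc]
        exact ⟨Finset.disjoint_sdiff, by rw [Finset.union_sdiff_of_subset hG.2]; exact hG.1⟩
      · intro G hG
        rw [mem_fc] at hG
        rw [Finset.mem_filter, mem_fc]
        exact ⟨hG.2, Finset.subset_union_left⟩
      · intro G hG
        exact Finset.union_sdiff_of_subset (Finset.mem_filter.mp hG).2
      · intro G hG
        rw [mem_fc] at hG
        exact Finset.union_sdiff_cancel_left hG.1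
      · intro G hG
        rw [Finset.mem_filter, mem_fc] at hG
        have hGd := h2 G hG.1
        have hFG := Finset.card_le_card hG.2
        rw [Finset.card_sdiff_of_subset hG.2, ← pow_add,
          show d - F.card + (G.card - F.card) = (d - G.card) + 2 * (G.card - F.card) by omega,
          pow_add _ (d - G.card), pow_mul]
        simp
    rw [e2, ← Finset.mul_sum, e1]
    simp [← mul_pow]
  · intro c _ hc
    rw [h4 F hF, if_neg (by omega)]; simp
  · intro hc; simp at hc

end Dim1

open Finset
set_option linter.unusedSectionVars false

section Dim2
variable {𝕜 : Type*} [Field 𝕜] [CharZero 𝕜] {U : Type*} [Fintype U] [LinearOrder U]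

open Polynomial in
lemma coeff_XsubOne (m k : ℕ) : ((X - 1 : ℤ[X]) ^ m).coeff k = (-1) ^ (m - k) * m.choose k := by
  have := coeff_X_add_C_pow (-1 : ℤ) m k
  simpa [sub_eq_add_neg] using this

lemma neg_pow_sub {m k : ℕ} (h : k ≤ m) : (-1 : ℤ) ^ m * (-1) ^ (m - k) = (-1) ^ k := by
  rw [← pow_add, show m + (m - k) = 2 * (m - k) + k by omega, pow_add, pow_mul]
  simp

open Polynomial in
lemma coeff_oneSubX (m k : ℕ) : ((1 - X : ℤ[X]) ^ m).coeff k = (-1) ^ k * m.choose k := by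
  have h : (1 - X : ℤ[X]) ^ m = C ((-1) ^ m) * (X - 1) ^ m := by
    rw [← neg_sub, neg_pow]; simp
  rw [h, coeff_C_mul, coeff_XsubOne, ← mul_assoc]
  rcases le_or_gt k m with hk | hk
  · rw [neg_pow_sub hk]
  · rw [Nat.choose_eq_zero_of_lt hk]; simp

open Polynomial in
/-- the `h`-polynomial -/
noncomputable def hpoly (Δ : Set (Finset U)) (d : ℕ) : ℤ[X] :=
  ∑ F ∈ fc Δ, X ^ F.card * (1 - X) ^ (d - F.card)

open Polynomial in
lemma coeff_hpoly (Δ : Set (Finset U)) (d i : ℕ) : (hpoly Δ d).coeff i = hVec Δ d i := by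
  unfold hpoly
  rw [finsetSum_coeff]
  have h1 : ∀ F ∈ fc Δ, ((X : ℤ[X]) ^ F.card * (1 - X) ^ (d - F.card)).coeff i =
      (fun c => if c ≤ i then (-1 : ℤ) ^ (i - c) * ((d - c).choose (i - c)) else 0) F.card := by
    intro F _
    rw [coeff_X_pow_mul', coeff_oneSubX]
  rw [Finset.sum_congr rfl h1, sum_fc Δ (fun c => if c ≤ i then (-1 : ℤ) ^ (i - c) * ((d - c).choose (i - c)) else 0) (i + Fintype.card U)
    (fun F _ => (Finset.card_le_univ F).trans (by omega)), hVec]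
  symm
  have hs : range (i + 1) ⊆ range (i + Fintype.card U + 1) := by intro x; simp; omega
  rw [← Finset.sum_subset hs]
  · refine Finset.sum_congr rfl fun j hj => ?_
    have : j ≤ i := by simp at hj; omega
    rw [if_pos this]
  · intro x _ hx
    rw [if_neg (by simp at hx; omega), zero_mul]

open Polynomial in
lemma hpoly_eq {Δ : Set (Finset U)} {d : ℕ} (hd : 1 ≤ d)
    (h : IsHomologySphere 𝕜 Δ (d - 1)) :
    hpoly Δ d = ∑ G ∈ fc Δ, (X - 1 : ℤ[X]) ^ (d - G.card) := by
  have hle : ∀ G ∈ fc Δ, G.card ≤ d := by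
    intro G hG
    have := h.2.1 G (mem_fc.mp hG)
    omega
  unfold hpoly
  have h1 : ∀ F ∈ fc Δ, (X : ℤ[X]) ^ F.card * (1 - X) ^ (d - F.card) =
      ∑ G ∈ fc Δ, if F ⊆ G then (X : ℤ[X]) ^ F.card * (1 - X) ^ (G.card - F.card) *
        (X - 1) ^ (d - G.card) else 0 := by
    intro F hF
    have := euler_link hd h (mem_fc.mp hF)
    have h2 : (1 : ℤ[X]) = ∑ G ∈ (fc Δ).filter (F ⊆ ·), (-1) ^ (d - G.card) := by
      have := congrArg (fun z : ℤ => (C z : ℤ[X])) this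
      simp only [map_sum, map_pow, map_neg, map_one] at this
      exact this.symm
    rw [← Finset.sum_filter]
    have h6 := congrArg (fun z => (X : ℤ[X]) ^ F.card * (1 - X) ^ (d - F.card) * z) h2
    simp only [mul_one, Finset.mul_sum] at h6
    rw [h6]
    refine Finset.sum_congr rfl fun G hG => ?_
    rw [Finset.mem_filter] at hG
    have h3 := Finset.card_le_card hG.2
    have h4 := hle G hG.1
    rw [show d - F.card = (G.card - F.card) + (d - G.card) by omega, pow_add,
      ← neg_sub 1 X, neg_pow (1 - X)]
    ring
  rw [Finset.sum_congr rfl h1, Finset.sum_comm]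
  refine Finset.sum_congr rfl fun G hG => ?_
  rw [← Finset.sum_filter, ← Finset.sum_mul]
  have h5 : (fc Δ).filter (· ⊆ G) = G.powerset := by
    ext F
    rw [Finset.mem_filter, mem_fc, Finset.mem_powerset]
    exact ⟨fun h => h.2, fun hh => ⟨h.1 G (mem_fc.mp hG) F hh, hh⟩⟩
  rw [h5, Finset.sum_pow_mul_eq_add_pow]
  simp

open Polynomial in
lemma hVec_symm {Δ : Set (Finset U)} {d : ℕ} (hd : 1 ≤ d)
    (h : IsHomologySphere 𝕜 Δ (d - 1)) {i : ℕ} (hi : i ≤ d) : hVec Δ d (d - i) = hVec Δ d i := by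
  rw [← coeff_hpoly, ← coeff_hpoly, hpoly_eq hd h, ← hpoly_eq hd h]
  conv_rhs => rw [hpoly_eq hd h]
  unfold hpoly
  rw [finsetSum_coeff, finsetSum_coeff]
  refine Finset.sum_congr rfl fun G hG => ?_
  have := h.2.1 G (mem_fc.mp hG)
  rw [coeff_X_pow_mul', coeff_oneSubX, coeff_XsubOne]
  split_ifs with hc
  · rw [show d - i - G.card = d - G.card - i by omega, Nat.choose_symm (by omega)]
  · rw [Nat.choose_eq_zero_of_lt (show d - G.card < i by omega)]; simp

end Dim2

open Finset
set_option linter.unusedSectionVars false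

section Hil1
open MvPolynomial
variable {𝕜 : Type*} [Field 𝕜] {U : Type*} [Fintype U] [LinearOrder U]

lemma deg_of_hom {f : MvPolynomial U 𝕜} {n : ℕ} (hf : f.IsHomogeneous n) {m : U →₀ ℕ}
    (hm : coeff m f ≠ 0) : m.degree = n :=
  (DFunLike.congr_fun (Finsupp.degree_eq_weight_one (R := ℕ)) m).trans (hf hm)

lemma mem_anti {m : U →₀ ℕ} {n : ℕ} : m ∈ (univ : Finset U).finsuppAntidiag n ↔ m.degree = n := by
  rw [Finset.mem_finsuppAntidiag, Finsupp.degree_eq_sum]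
  simp

lemma homog_span (n : ℕ) : homogeneousSubmodule U 𝕜 n =
    Submodule.span 𝕜 ((fun m => monomial m (1 : 𝕜)) ''
      (((univ : Finset U).finsuppAntidiag n : Finset (U →₀ ℕ)) : Set (U →₀ ℕ))) := by
  apply le_antisymm
  · intro f hf
    rw [f.as_sum]
    refine sum_mem fun m hm => ?_
    have : monomial m (coeff m f) = coeff m f • monomial m (1 : 𝕜) := by
      rw [smul_monomial, smul_eq_mul, mul_one]
    rw [this]
    refine Submodule.smul_mem _ _ (Submodule.subset_span ?_)
    exact ⟨m, mem_anti.mpr (deg_of_hom hf (by simpa using hm)), rfl⟩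
  · rw [Submodule.span_le]
    intro f hf
    obtain ⟨m, hm, rfl⟩ := hf
    exact isHomogeneous_monomial _ (mem_anti.mp hm)

instance homog_fin (n : ℕ) : FiniteDimensional 𝕜 (homogeneousSubmodule U 𝕜 n) := by
  have h : FiniteDimensional 𝕜 (Submodule.span 𝕜 ((fun m => monomial m (1 : 𝕜)) ''
      (((univ : Finset U).finsuppAntidiag n : Finset (U →₀ ℕ)) : Set (U →₀ ℕ)))) :=
    FiniteDimensional.span_of_finite 𝕜 ((Finset.finite_toSet _).image _)
  rwa [← homog_span] at h

instance quot_fin (K : Ideal (MvPolynomial U 𝕜)) (n : ℕ) : FiniteDimensional 𝕜 (quotPiece 𝕜 K n) := by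
  have := homog_fin (𝕜 := 𝕜) (U := U) n
  exact Module.Finite.map (homogeneousSubmodule U 𝕜 n) (Ideal.Quotient.mkₐ 𝕜 K).toLinearMap

lemma mem_quotPiece {K : Ideal (MvPolynomial U 𝕜)} {n : ℕ} {x : MvPolynomial U 𝕜 ⧸ K} :
    x ∈ quotPiece 𝕜 K n ↔ ∃ f : MvPolynomial U 𝕜, f.IsHomogeneous n ∧ Ideal.Quotient.mk K f = x :=
  Iff.rfl

open Classical in
lemma hilb_SR {Δ : Set (Finset U)} (hΔ : IsComplex Δ) (n : ℕ) :
    hilb 𝕜 (SRideal 𝕜 Δ) n =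
      (((univ : Finset U).finsuppAntidiag n).filter (fun m => m.support ∈ Δ)).card := by
  set T := ((univ : Finset U).finsuppAntidiag n).filter (fun m => m.support ∈ Δ) with hT
  set b : T → MvPolynomial U 𝕜 ⧸ SRideal 𝕜 Δ :=
    fun m => Ideal.Quotient.mkₐ 𝕜 (SRideal 𝕜 Δ) (monomial m.1 (1 : 𝕜)) with hb
  have hli : LinearIndependent 𝕜 b := by
    rw [Fintype.linearIndependent_iff]
    intro g hg i
    have h1 : ∑ m : T, monomial m.1 (g m) ∈ SRideal 𝕜 Δ := by
      rw [← Ideal.Quotient.eq_zero_iff_mem, ← hg, map_sum]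
      refine Finset.sum_congr rfl fun m _ => ?_
      rw [hb]
      simp only
      rw [← map_smul, smul_monomial, smul_eq_mul, mul_one]
      rfl
    rw [SR_mem hΔ] at h1
    by_contra hne
    refine h1 i.1 ?_ (Finset.mem_filter.mp i.2).2
    rw [coeff_sum, Finset.sum_eq_single i]
    · rwa [coeff_monomial, if_pos rfl]
    · intro m _ hm
      rw [coeff_monomial, if_neg (fun h => hm (Subtype.ext h))]
    · simp
  have hsp : quotPiece 𝕜 (SRideal 𝕜 Δ) n = Submodule.span 𝕜 (Set.range b) := by
    apply le_antisymm
    · unfold quotPiece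
      rw [homog_span, Submodule.map_span, Submodule.span_le]
      rintro _ ⟨f, hf, rfl⟩
      obtain ⟨m, hm, rfl⟩ := hf
      by_cases hmΔ : m.support ∈ Δ
      · exact Submodule.subset_span ⟨⟨m, Finset.mem_filter.mpr ⟨hm, hmΔ⟩⟩, rfl⟩
      · have : monomial m (1 : 𝕜) ∈ SRideal 𝕜 Δ := by
          rw [SR_mem hΔ]
          intro m' hm'
          rw [coeff_monomial] at hm'
          split_ifs at hm' with h
          · rwa [← h]
          · exact absurd rfl hm'
        rw [← Ideal.Quotient.eq_zero_iff_mem] at this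
        have h2 : (Ideal.Quotient.mkₐ 𝕜 (SRideal 𝕜 Δ)).toLinearMap (monomial m (1 : 𝕜)) = 0 := this
        rw [h2]
        exact zero_mem _
    · rw [Submodule.span_le]
      rintro _ ⟨m, rfl⟩
      exact ⟨_, isHomogeneous_monomial _ (mem_anti.mp (Finset.mem_filter.mp m.2).1), rfl⟩
  rw [hilb, hsp, finrank_span_eq_card hli, Fintype.card_coe]

/-- multiplication in the quotient -/
noncomputable def mulq (K : Ideal (MvPolynomial U 𝕜)) (u : MvPolynomial U 𝕜) :
    (MvPolynomial U 𝕜 ⧸ K) →ₗ[𝕜] (MvPolynomial U 𝕜 ⧸ K) :=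
  LinearMap.mulLeft 𝕜 (Ideal.Quotient.mk K u)

lemma mulq_map_le (K : Ideal (MvPolynomial U 𝕜)) {u : MvPolynomial U 𝕜} (hu : u.IsHomogeneous 1)
    (n : ℕ) : (quotPiece 𝕜 K n).map (mulq K u) ≤ quotPiece 𝕜 K (n + 1) := by
  rintro _ ⟨x, hx, rfl⟩
  obtain ⟨f, hf, rfl⟩ := mem_quotPiece.mp hx
  exact mem_quotPiece.mpr ⟨u * f, mul_hom hu hf, map_mul _ _ _⟩

lemma INJ_iff (K : Ideal (MvPolynomial U 𝕜)) (u : MvPolynomial U 𝕜) (n : ℕ) :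
    INJ K u n ↔ quotPiece 𝕜 K n ⊓ LinearMap.ker (mulq K u) = ⊥ := by
  rw [Submodule.eq_bot_iff]
  constructor
  · rintro h x ⟨hx, hx2⟩
    obtain ⟨f, hf, rfl⟩ := mem_quotPiece.mp hx
    rw [Ideal.Quotient.eq_zero_iff_mem]
    refine h f hf ?_
    rw [← Ideal.Quotient.eq_zero_iff_mem, map_mul]
    exact hx2
  · intro h f hf hm
    rw [← Ideal.Quotient.eq_zero_iff_mem]
    refine h _ ⟨mem_quotPiece.mpr ⟨f, hf, rfl⟩, ?_⟩
    rw [← Ideal.Quotient.eq_zero_iff_mem, map_mul] at hm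
    exact hm

lemma finrank_mulq (K : Ideal (MvPolynomial U 𝕜)) (u : MvPolynomial U 𝕜) (n : ℕ)
    (h : INJ K u n) : Module.finrank 𝕜 ((quotPiece 𝕜 K n).map (mulq K u)) = hilb 𝕜 K n := by
  have := dimsplit (mulq K u) (quotPiece 𝕜 K n)
  rw [(INJ_iff K u n).mp h, finrank_bot, add_zero] at this
  exact this

lemma hilb_step {K : Ideal (MvPolynomial U 𝕜)} (hK : IsHomogIdeal 𝕜 K) {u : MvPolynomial U 𝕜}
    (hu : u.IsHomogeneous 1) (n : ℕ) (h : INJ K u n) :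
    hilb 𝕜 (K ⊔ Ideal.span {u}) (n + 1) + hilb 𝕜 K n = hilb 𝕜 K (n + 1) := by
  rw [← finrank_mulq K u n h]
  set q := (Ideal.Quotient.factorₐ 𝕜 (le_sup_left : K ≤ K ⊔ Ideal.span {u})).toLinearMap with hq
  have := dimsplit q (quotPiece 𝕜 K (n + 1))
  have h1 : (quotPiece 𝕜 K (n + 1)).map q = quotPiece 𝕜 (K ⊔ Ideal.span {u}) (n + 1) := by
    unfold quotPiece
    rw [← Submodule.map_comp]
    rfl
  have h2 : quotPiece 𝕜 K (n + 1) ⊓ LinearMap.ker q = (quotPiece 𝕜 K n).map (mulq K u) := by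
    apply le_antisymm
    · rintro x ⟨hx, hx2⟩
      obtain ⟨f, hf, rfl⟩ := mem_quotPiece.mp hx
      have h3 : Ideal.Quotient.mk (K ⊔ Ideal.span {u}) f = 0 := hx2
      rw [Ideal.Quotient.eq_zero_iff_mem] at h3
      obtain ⟨ξ, hξ, h4⟩ := split_u hK hu h3 hf
      refine ⟨Ideal.Quotient.mk K ξ, mem_quotPiece.mpr ⟨ξ, hξ, rfl⟩, ?_⟩
      rw [← Ideal.Quotient.eq_zero_iff_mem, map_sub, sub_eq_zero, map_mul] at h4
      exact h4.symm
    · refine le_inf (mulq_map_le K hu n) ?_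
      rintro _ ⟨x, hx, rfl⟩
      obtain ⟨f, hf, rfl⟩ := mem_quotPiece.mp hx
      have : Ideal.Quotient.mk (K ⊔ Ideal.span {u}) (u * f) = 0 := by
        rw [Ideal.Quotient.eq_zero_iff_mem]
        exact Ideal.mem_sup_right (Ideal.mul_mem_right _ _ (Ideal.mem_span_singleton_self _))
      exact this
  rw [h1, h2] at this
  exact this

lemma hilb_step0 {K : Ideal (MvPolynomial U 𝕜)} (hK : IsHomogIdeal 𝕜 K) {u : MvPolynomial U 𝕜}
    (hu : u.IsHomogeneous 1) :
    hilb 𝕜 (K ⊔ Ideal.span {u}) 0 = hilb 𝕜 K 0 := by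
  set q := (Ideal.Quotient.factorₐ 𝕜 (le_sup_left : K ≤ K ⊔ Ideal.span {u})).toLinearMap with hq
  have := dimsplit q (quotPiece 𝕜 K 0)
  have h1 : (quotPiece 𝕜 K 0).map q = quotPiece 𝕜 (K ⊔ Ideal.span {u}) 0 := by
    unfold quotPiece
    rw [← Submodule.map_comp]
    rfl
  have h2 : quotPiece 𝕜 K 0 ⊓ LinearMap.ker q = ⊥ := by
    rw [Submodule.eq_bot_iff]
    rintro x ⟨hx, hx2⟩
    obtain ⟨f, hf, rfl⟩ := mem_quotPiece.mp hx
    have h3 : Ideal.Quotient.mk (K ⊔ Ideal.span {u}) f = 0 := hx2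
    rw [Ideal.Quotient.eq_zero_iff_mem] at h3 ⊢
    exact split_u0 hK hu h3 hf
  rw [h1, h2, finrank_bot, add_zero] at this
  exact this

end Hil1

open Finset
set_option linter.unusedSectionVars false

section Hil2
variable {𝕜 : Type*} [Field 𝕜] {U : Type*} [Fintype U] [LinearOrder U]

/-- Hilbert series -/
noncomputable def HS (K : Ideal (MvPolynomial U 𝕜)) : PowerSeries ℤ :=
  PowerSeries.mk (fun n => (hilb 𝕜 K n : ℤ))

lemma HS_step {K : Ideal (MvPolynomial U 𝕜)} (hK : IsHomogIdeal 𝕜 K) {u : MvPolynomial U 𝕜}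
    (hu : u.IsHomogeneous 1) (h : ∀ n, INJ K u n) :
    HS (K ⊔ Ideal.span {u}) = (1 - PowerSeries.X) * HS K := by
  ext n
  rw [sub_mul, one_mul, map_sub]
  cases n with
  | zero =>
    rw [PowerSeries.coeff_zero_X_mul]
    simp only [HS, PowerSeries.coeff_mk, hilb_step0 hK hu, sub_zero]
  | succ n =>
    rw [PowerSeries.coeff_succ_X_mul]
    simp only [HS, PowerSeries.coeff_mk, ← hilb_step hK hu n (h n)]
    push_cast; ring

lemma HS_CH {I : Ideal (MvPolynomial U 𝕜)} (hI : IsHomogIdeal 𝕜 I) {u : ℕ → MvPolynomial U 𝕜}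
    (hu : ∀ s, (u s).IsHomogeneous 1) {d : ℕ}
    (hreg : ∀ s < d, ∀ g, u s * g ∈ CH I u s → g ∈ CH I u s) (s : ℕ) (hs : s ≤ d) :
    HS (CH I u s) = (1 - PowerSeries.X) ^ s * HS I := by
  induction s with
  | zero => rw [pow_zero, one_mul]; rfl
  | succ s ih =>
    have := HS_step (CH_homog hI hu s) (hu s) (fun n m _ hm => hreg s (by omega) m hm)
    rw [CH, this, ih (by omega), pow_succ]; ring

lemma coeff_geom (F : Finset U) (n : ℕ) :
    PowerSeries.coeff n ((PowerSeries.X * PowerSeries.mk (1 : ℕ → ℤ) : PowerSeries ℤ) ^ F.card) =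
      ((((univ : Finset U).finsuppAntidiag n).filter (fun m => m.support = F)).card : ℤ) := by
  rw [← Finset.prod_const, PowerSeries.coeff_prod]
  have hc : ∀ k : ℕ, PowerSeries.coeff k (PowerSeries.X * PowerSeries.mk (1 : ℕ → ℤ)) =
      if k ≠ 0 then 1 else 0 := by
    intro k
    cases k with
    | zero => simp
    | succ k => rw [PowerSeries.coeff_succ_X_mul]; simp
  simp only [hc, Finset.prod_ite_zero, Finset.prod_const_one]
  rw [← Finset.sum_filter, Finset.sum_const, nsmul_eq_mul, mul_one]
  congr 2
  ext m
  simp only [Finset.mem_filter, Finset.mem_finsuppAntidiag]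
  constructor
  · rintro ⟨⟨h1, h2⟩, h3⟩
    have h4 : m.support = F := by
      apply h2.antisymm
      intro v hv
      simpa using h3 v hv
    refine ⟨⟨?_, Finset.subset_univ _⟩, h4⟩
    rw [← h1]
    refine (Finset.sum_subset (Finset.subset_univ _) ?_).symm
    intro v _ hv
    rw [← h4] at hv; simpa using hv
  · rintro ⟨⟨h1, _⟩, rfl⟩
    refine ⟨⟨?_, le_rfl⟩, fun v hv => by simpa using hv⟩
    rw [← h1]
    refine Finset.sum_subset (Finset.subset_univ _) ?_
    intro v _ hv
    simpa using hv

lemma HS_SR {Δ : Set (Finset U)} (hΔ : IsComplex Δ) :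
    HS (SRideal 𝕜 Δ) =
      ∑ F ∈ fc Δ, (PowerSeries.X * PowerSeries.mk (1 : ℕ → ℤ)) ^ F.card := by
  classical
  ext n
  rw [map_sum, HS, PowerSeries.coeff_mk, hilb_SR hΔ]
  simp only [coeff_geom]
  rw [← Nat.cast_sum, Finset.card_eq_sum_card_fiberwise (f := fun m => m.support) (t := fc Δ)]
  · congr 1
    refine Finset.sum_congr rfl fun F hF => ?_
    congr 1
    ext m
    simp only [Finset.mem_filter]
    constructor
    · rintro ⟨⟨h1, _⟩, h2⟩; exact ⟨h1, h2⟩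
    · rintro ⟨h1, rfl⟩; exact ⟨⟨h1, mem_fc.mp hF⟩, rfl⟩
  · intro m hm
    exact mem_fc.mpr (Finset.mem_filter.mp hm).2

lemma hilb_hVec {Δ : Set (Finset U)} (hΔ : IsComplex Δ) {u : ℕ → MvPolynomial U 𝕜}
    (hu : ∀ s, (u s).IsHomogeneous 1) {d : ℕ} (hd : ∀ F ∈ Δ, F.card ≤ d)
    (hreg : ∀ s < d, ∀ g, u s * g ∈ CH (SRideal 𝕜 Δ) u s → g ∈ CH (SRideal 𝕜 Δ) u s) (n : ℕ) :
    (hilb 𝕜 (CH (SRideal 𝕜 Δ) u d) n : ℤ) = hVec Δ d n := by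
  have h1 := HS_CH (SR_homog hΔ) hu hreg d le_rfl
  have h2 : HS (CH (SRideal 𝕜 Δ) u d) = (hpoly Δ d : PowerSeries ℤ) := by
    rw [h1, HS_SR hΔ, hpoly, Finset.mul_sum]
    have : ((∑ F ∈ fc Δ, Polynomial.X ^ F.card * (1 - Polynomial.X) ^ (d - F.card) :
        Polynomial ℤ) : PowerSeries ℤ) =
        ∑ F ∈ fc Δ, PowerSeries.X ^ F.card * (1 - PowerSeries.X) ^ (d - F.card) := by
      rw [← Polynomial.coeToPowerSeries.ringHom_apply, map_sum]
      simp [Polynomial.coeToPowerSeries.ringHom_apply]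
    rw [this]
    refine Finset.sum_congr rfl fun F hF => ?_
    have hF := hd F (mem_fc.mp hF)
    have h3 := PowerSeries.mk_one_mul_one_sub_eq_one ℤ
    have h4 : (1 - PowerSeries.X : PowerSeries ℤ) ^ d =
        (1 - PowerSeries.X) ^ F.card * (1 - PowerSeries.X) ^ (d - F.card) := by
      rw [← pow_add]; congr 1; omega
    calc _ = PowerSeries.X ^ F.card * (1 - PowerSeries.X) ^ (d - F.card) *
          (PowerSeries.mk (1 : ℕ → ℤ) * (1 - PowerSeries.X)) ^ F.card := by
            rw [h4, mul_pow, mul_pow]; ring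
      _ = _ := by rw [h3, one_pow, mul_one]
  have h5 := congrArg (PowerSeries.coeff n) h2
  rw [HS, PowerSeries.coeff_mk, Polynomial.coeff_coe, coeff_hpoly] at h5
  exact h5

end Hil2

open Finset
set_option linter.unusedSectionVars false

section Hil3
open MvPolynomial
variable {𝕜 : Type*} [Field 𝕜] {U : Type*} [Fintype U] [LinearOrder U]

/-- surjectivity of multiplication in degree `j` -/
def SUR (K : Ideal (MvPolynomial U 𝕜)) (w : MvPolynomial U 𝕜) (j : ℕ) : Prop :=
  ∀ f : MvPolynomial U 𝕜, f.IsHomogeneous (j + 1) → f ∈ K ⊔ Ideal.span {w}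

lemma SUR_iff {K : Ideal (MvPolynomial U 𝕜)} (hK : IsHomogIdeal 𝕜 K) {w : MvPolynomial U 𝕜}
    (hw : w.IsHomogeneous 1) (j : ℕ) :
    SUR K w j ↔ quotPiece 𝕜 K (j + 1) ≤ (quotPiece 𝕜 K j).map (mulq K w) := by
  constructor
  · intro h x hx
    obtain ⟨f, hf, rfl⟩ := mem_quotPiece.mp hx
    obtain ⟨ξ, hξ, h4⟩ := split_u hK hw (h f hf) hf
    refine ⟨Ideal.Quotient.mk K ξ, mem_quotPiece.mpr ⟨ξ, hξ, rfl⟩, ?_⟩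
    rw [← Ideal.Quotient.eq_zero_iff_mem, map_sub, sub_eq_zero, map_mul] at h4
    exact h4.symm
  · intro h f hf
    obtain ⟨y, hy, h1⟩ := h (mem_quotPiece.mpr ⟨f, hf, rfl⟩)
    obtain ⟨g, hg, rfl⟩ := mem_quotPiece.mp hy
    have h2 : Ideal.Quotient.mk K (f - w * g) = 0 := by
      rw [map_sub, sub_eq_zero, map_mul]
      exact h1.symm
    rw [Ideal.Quotient.eq_zero_iff_mem] at h2
    have h3 : f = (f - w * g) + w * g := by ring
    rw [h3]
    exact Ideal.add_mem _ (Ideal.mem_sup_left h2)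
      (Ideal.mem_sup_right (Ideal.mul_mem_right _ _ (Ideal.mem_span_singleton_self w)))

lemma SUR_mono [CharZero 𝕜] {K : Ideal (MvPolynomial U 𝕜)} {w : MvPolynomial U 𝕜} {i j : ℕ}
    (hij : i ≤ j) (h : SUR K w i) : SUR K w j :=
  up_mem h (j + 1) (by omega)

lemma INJ_le {K : Ideal (MvPolynomial U 𝕜)} {w : MvPolynomial U 𝕜}
    (hw : w.IsHomogeneous 1) {j : ℕ} (h : INJ K w j) : hilb 𝕜 K j ≤ hilb 𝕜 K (j + 1) := by
  rw [← finrank_mulq K w j h]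
  exact Submodule.finrank_mono (mulq_map_le K hw j)

lemma SUR_eq {K : Ideal (MvPolynomial U 𝕜)} (hK : IsHomogIdeal 𝕜 K) {w : MvPolynomial U 𝕜}
    (hw : w.IsHomogeneous 1) {j : ℕ} (h : SUR K w j) :
    quotPiece 𝕜 K (j + 1) = (quotPiece 𝕜 K j).map (mulq K w) :=
  le_antisymm ((SUR_iff hK hw j).mp h) (mulq_map_le K hw j)

lemma SUR_le {K : Ideal (MvPolynomial U 𝕜)} (hK : IsHomogIdeal 𝕜 K) {w : MvPolynomial U 𝕜}
    (hw : w.IsHomogeneous 1) {j : ℕ} (h : SUR K w j) : hilb 𝕜 K (j + 1) ≤ hilb 𝕜 K j := by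
  have := dimsplit (mulq K w) (quotPiece 𝕜 K j)
  rw [← SUR_eq hK hw h] at this
  unfold hilb; omega

lemma SUR_INJ {K : Ideal (MvPolynomial U 𝕜)} (hK : IsHomogIdeal 𝕜 K) {w : MvPolynomial U 𝕜}
    (hw : w.IsHomogeneous 1) {j : ℕ} (h : SUR K w j) (he : hilb 𝕜 K j = hilb 𝕜 K (j + 1)) :
    INJ K w j := by
  have := dimsplit (mulq K w) (quotPiece 𝕜 K j)
  rw [← SUR_eq hK hw h] at this
  unfold hilb at he
  have hfin : FiniteDimensional 𝕜
      (quotPiece 𝕜 K j ⊓ LinearMap.ker (mulq K w) : Submodule 𝕜 (MvPolynomial U 𝕜 ⧸ K)) :=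
    Submodule.finiteDimensional_inf_left _ _
  rw [INJ_iff, ← Submodule.finrank_eq_zero (R := 𝕜)]
  omega

lemma INJ_SUR {K : Ideal (MvPolynomial U 𝕜)} (hK : IsHomogIdeal 𝕜 K) {w : MvPolynomial U 𝕜}
    (hw : w.IsHomogeneous 1) {j : ℕ} (h : INJ K w j) (he : hilb 𝕜 K j = hilb 𝕜 K (j + 1)) :
    SUR K w j := by
  rw [SUR_iff hK hw]
  refine (Submodule.eq_of_le_of_finrank_eq (mulq_map_le K hw j) ?_).ge
  rw [finrank_mulq K w j h, he]; rfl

lemma wlp_comb [CharZero 𝕜] {K : Ideal (MvPolynomial U 𝕜)} (hK : IsHomogIdeal 𝕜 K)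
    {w : MvPolynomial U 𝕜} (hw : w.IsHomogeneous 1) (hor : ∀ j, INJ K w j ∨ SUR K w j)
    {d r : ℕ} (hr : 1 ≤ r) (hr2 : 2 * r ≤ d) (hsym : ∀ i ≤ d, hilb 𝕜 K (d - i) = hilb 𝕜 K i)
    (he : hilb 𝕜 K (r - 1) = hilb 𝕜 K r) :
    SUR K w (r - 1) ∧ ∀ j ≤ d - r, INJ K w j := by
  have he' : hilb 𝕜 K (r - 1) = hilb 𝕜 K (r - 1 + 1) := by rw [he]; congr 1; omega
  have hS : SUR K w (r - 1) := by
    rcases hor (r - 1) with h | h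
    · exact INJ_SUR hK hw h he'
    · exact h
  have anti : ∀ a, SUR K w a → ∀ i j, a ≤ i → i ≤ j → hilb 𝕜 K j ≤ hilb 𝕜 K i := by
    intro a ha i j hai hij
    induction j, hij using Nat.le_induction with
    | base => exact le_rfl
    | succ j hj ih => exact (SUR_le hK hw (SUR_mono (hai.trans hj) ha)).trans ih
  have key : ∀ a j, SUR K w a → a ≤ j → j + 1 ≤ d - a → INJ K w j := by
    intro a j ha haj hj
    refine SUR_INJ hK hw (SUR_mono haj ha) ?_
    have h1 := anti a ha a j le_rfl haj
    have h2 := anti a ha j (j + 1) haj (by omega)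
    have h3 := anti a ha (j + 1) (d - a) (by omega) hj
    have h4 := hsym a (by omega)
    omega
  refine ⟨hS, fun j hj => ?_⟩
  by_cases hjr : r - 1 ≤ j
  · exact key (r - 1) j hS hjr (by omega)
  · rcases hor j with h | h
    · exact h
    · exact key j j h le_rfl (by omega)

lemma CH_eq (I : Ideal (MvPolynomial U 𝕜)) {d : ℕ} (θ : Fin d → MvPolynomial U 𝕜)
    (u : ℕ → MvPolynomial U 𝕜) (hu : ∀ i : Fin d, u i = θ i) (s : ℕ) (hs : s ≤ d) :
    CH I u s = I ⊔ Ideal.span (θ '' {j | (j : ℕ) < s}) := by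
  induction s with
  | zero => simp [CH]
  | succ s ih =>
    rw [CH, ih (by omega), sup_assoc, ← Ideal.span_union]
    congr 2
    have h1 : {j : Fin d | (j : ℕ) < s + 1} = {j : Fin d | (j : ℕ) < s} ∪ {⟨s, by omega⟩} := by
      ext j
      simp only [Set.mem_setOf_eq, Set.mem_union, Set.mem_singleton_iff, Fin.ext_iff]
      omega
    rw [h1, Set.image_union, Set.image_singleton, ← hu]

lemma final_main [CharZero 𝕜]
    (Δ : Set (Finset U)) (d r : ℕ)
    (hsphere : IsHomologySphere 𝕜 Δ (d - 1))
    (hwlp : HasWLP 𝕜 (SRideal 𝕜 Δ) d)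
    (hr1 : 1 ≤ r) (hr2 : 2 * r ≤ d)
    (hh : hVec Δ d (r - 1) = hVec Δ d r) :
    IsHomologyBall 𝕜 (skc Δ (r - 1)) d ∧
    bdryFaces 𝕜 (skc Δ (r - 1)) d = Δ := by
  have hΔ := hsphere.1
  obtain ⟨⟨_, hCM⟩, θ, hθ, w, hw, hWL⟩ := hwlp
  have hw : w.IsHomogeneous 1 := hw
  set u : ℕ → MvPolynomial U 𝕜 := fun s => if h : s < d then θ ⟨s, h⟩ else w with hudef
  have huθ : ∀ i : Fin d, u i = θ i := fun i => by simp [hudef]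
  have hud : u d = w := by simp [hudef]
  have hu : ∀ s, (u s).IsHomogeneous 1 := by
    intro s
    by_cases h : s < d
    · have := hθ.1 ⟨s, h⟩
      rw [← huθ] at this
      exact this
    · have : u s = w := by simp [hudef, h]
      rw [this]; exact hw
  have hreg : ∀ s < d, ∀ g, u s * g ∈ CH (SRideal 𝕜 Δ) u s → g ∈ CH (SRideal 𝕜 Δ) u s := by
    intro s hs g hg
    rw [CH_eq _ θ u huθ s hs.le] at hg ⊢
    rw [huθ ⟨s, hs⟩] at hg
    exact hCM θ hθ ⟨s, hs⟩ g hg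
  have hKd : CH (SRideal 𝕜 Δ) u d = SRideal 𝕜 Δ ⊔ Ideal.span (Set.range θ) := by
    rw [CH_eq _ θ u huθ d le_rfl, ← Set.image_univ]
    congr 3
    ext j; simp
  have hK := CH_homog (SR_homog (𝕜 := 𝕜) hΔ) hu d
  have hor : ∀ j, INJ (CH (SRideal 𝕜 Δ) u d) w j ∨ SUR (CH (SRideal 𝕜 Δ) u d) w j := by
    rw [← hKd] at hWL
    intro j
    rcases hWL j with h | h
    · left
      intro f hf hm
      rw [← Ideal.Quotient.eq_zero_iff_mem] at hm ⊢
      rw [map_mul] at hm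
      exact h _ (mem_quotPiece.mpr ⟨f, hf, rfl⟩) hm
    · right
      rw [SUR_iff hK hw]
      intro x hx
      obtain ⟨f, hf, h1⟩ := h x hx
      exact ⟨f, hf, h1⟩
  have hcard : ∀ F ∈ Δ, F.card ≤ d := fun F hF => by
    have := hsphere.2.1 F hF
    omega
  have hhil := hilb_hVec hΔ hu hcard hreg
  have hsym : ∀ i ≤ d, hilb 𝕜 (CH (SRideal 𝕜 Δ) u d) (d - i) =
      hilb 𝕜 (CH (SRideal 𝕜 Δ) u d) i := by
    intro i hi
    have h1 := hVec_symm (𝕜 := 𝕜) (by omega : 1 ≤ d) hsphere hi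
    rw [← hhil, ← hhil] at h1
    exact_mod_cast h1
  have he : hilb 𝕜 (CH (SRideal 𝕜 Δ) u d) (r - 1) = hilb 𝕜 (CH (SRideal 𝕜 Δ) u d) r := by
    rw [← hhil, ← hhil] at hh
    exact_mod_cast hh
  obtain ⟨hS, hI⟩ := wlp_comb hK hw hor hr1 hr2 hsym he
  obtain ⟨hL, hA⟩ := alg_skc hΔ hr1 hr2 u hu hreg (fun n hn => by rw [hud]; exact hI n hn)
    (fun f hf => by
      rw [CH, hud]
      exact hS f (by rwa [Nat.sub_add_cancel hr1]))
  refine ball_of_top hsphere (skc_complex _ _) (sub_skc hΔ _) hr1 hr2 ?_ hL hA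
  intro F hF hc
  exact hF F (Finset.Subset.refl F) (by omega)

end Hil3

/-- Suppose `char 𝕜 = 0` and let `Δ` be a homology
`(d-1)`-sphere over `𝕜` having the weak Lefschetz property. If
`h_{r-1}(Δ) = h_r(Δ)` for some `r ≤ d/2`, then `Δ(r-1)` is a homology
`d`-ball over `𝕜` whose boundary complex equals `Δ`. -/
theorem skc_is_homology_ball_of_WLP_sphere
    (𝕜 : Type*) [Field 𝕜] [CharZero 𝕜] {V : Type*} [Fintype V] [LinearOrder V]
    (Δ : Set (Finset V)) (d r : ℕ)
    (hsphere : IsHomologySphere 𝕜 Δ (d - 1))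
    (hwlp : HasWLP 𝕜 (SRideal 𝕜 Δ) d)
    (hr1 : 1 ≤ r) (hr2 : 2 * r ≤ d)
    (hh : hVec Δ d (r - 1) = hVec Δ d r) :
    IsHomologyBall 𝕜 (skc Δ (r - 1)) d ∧
    bdryFaces 𝕜 (skc Δ (r - 1)) d = Δ := by
  exact final_main Δ d r hsphere hwlp hr1 hr2 hh
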